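/- arXiv:0907.3164 — 2 statements merged into one kernel-verified Lean document; each statement's English description precedes it below -/
import Mathlib

section
/- Let M be a smooth compact Riemannian manifold of dimension n with geodesic distance d and Riemannian measure μ, let a > 1, and let {E_{j,k}}, {x_{j,k}}, {Φ_{j,k}}, {Ψ_{j,k}} and 0 ≤ J ≤ 1 be as follows: for each j ∈ ℤ, {E_{j,k} : 1 ≤ k ≤ N_j} is a finite disjoint measurable partition of M with each E_{j,k} of diameter less than a^j, x_{j,k} ∈ E_{j,k}, and Φ_{j,k}, Ψ_{j,k} ∈ 𝒩_{x_{j,k}, a^j}. Then for every η > 0, the series ∑_{j∈ℤ} ∑_{k=1}^{N_j} a^{−jJ} μ(E_{j,k}) |Φ_{j,k}(x) Ψ_{j,k}(y)| converges uniformly on the set {(x,y) ∈ M × M : d(x,y) ≥ η}. -/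
open Metric Manifold MeasureTheory

noncomputable section

/-- The class `𝒩_{x,t}` of smooth functions `Φ` on `M` with
`tⁿ |(d(x,y)/t)^N Φ(y)| ≤ 1` for all `y ∈ M` and `0 ≤ N ≤ n+2`. -/
def NClass (n : ℕ) {M : Type*} [MetricSpace M]
    [ChartedSpace (EuclideanSpace ℝ (Fin n)) M]
    (x : M) (t : ℝ) : Set (M → ℂ) :=
  {Φ | ContMDiff (𝓡 n) 𝓘(ℝ, ℂ) (⊤ : ℕ∞) Φ ∧
    ∀ (y : M) (N : ℕ), N ≤ n + 2 → t ^ n * ((dist x y / t) ^ N * ‖Φ y‖) ≤ 1}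

/-!
Members of `𝒩_{x,t}` are dominated by a multiple of `P_t(d(x,·))`, where
`P_t(d) = t² / (t + d)ⁿ⁺²`. Bi-Lipschitz charts and compactness give `μ(B(y,r)) ≤ C rⁿ`, so
`∫ P_t(d(z,y)) dμ(z)` is bounded uniformly in `t` and `y`. On the cell `E_{j,k}` the function
`P_t(d(·,y))`, `t = a^j`, is comparable to its value at `x_{j,k}`, hence
`∑_k μ(E_{j,k}) P_t(d(x_{j,k},y))` is bounded as well. If `d(x,y) ≥ η`, every centre is at distance
at least `η/2` from `x` or from `y`, so in each product one factor is at most `P_t(η/2)` and the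
other one sums to `O(1)`. The `j`-th block is therefore `O(a^{-jJ} P_t(η/2))`, and since
`P_t(η/2) ≲ min(t⁻ⁿ, t²)` this is summable over `j ∈ ℤ` for every `-n < J < 2`. The single terms
need not have summable suprema, so the Weierstrass test is applied to the blocks.
-/

open Filter
open scoped Topology NNReal

section UpperAhlforsRegular

variable {X : Type*} [PseudoMetricSpace X] [MeasurableSpace X]

/-- Upper Ahlfors `n`-regularity of `μ` with constant `C`, at all scales. Nonpositive radii are
harmless: the ball is then empty. -/
def IsUpperAhlforsRegular (μ : Measure X) (n : ℕ) (C : ℝ≥0) : Prop :=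
  ∀ (x : X) (r : ℝ), μ (ball x r) ≤ C * ENNReal.ofReal r ^ n

theorem IsUpperAhlforsRegular.measure_ne_top_of_subset_ball {μ : Measure X} {n : ℕ} {C : ℝ≥0}
    (hμ : IsUpperAhlforsRegular μ n C) {s : Set X} {x : X} {r : ℝ} (hs : s ⊆ ball x r) :
    μ s ≠ ⊤ :=
  ne_top_of_le_ne_top (by finiteness) ((measure_mono hs).trans (hμ x r))

theorem exists_eventually_measure_ball_le [CompactSpace X] {μ : Measure X} {n : ℕ}
    (h : ∀ x : X, ∃ U ∈ 𝓝 x, ∃ C : ℝ≥0, ∀ᶠ r in 𝓝 0, ∀ y ∈ U,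
      μ (ball y r) ≤ C * ENNReal.ofReal r ^ n) :
    ∃ C : ℝ≥0, ∀ᶠ r in 𝓝 0, ∀ y, μ (ball y r) ≤ C * ENNReal.ofReal r ^ n := by
  suffices ∃ C : ℝ≥0, ∀ᶠ r in 𝓝 0, ∀ y ∈ (Set.univ : Set X),
      μ (ball y r) ≤ C * ENNReal.ofReal r ^ n by
    simpa only [Set.mem_univ, true_imp_iff] using this
  refine isCompact_univ.induction_on (p := fun s : Set X => ∃ C : ℝ≥0, ∀ᶠ r in 𝓝 0, ∀ y ∈ s,
    μ (ball y r) ≤ C * ENNReal.ofReal r ^ n) ⟨0, by simp⟩ ?_ ?_ ?_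
  · rintro s t hst ⟨C, hC⟩
    exact ⟨C, hC.mono fun r hr y hy => hr y (hst hy)⟩
  · rintro s t ⟨C, hC⟩ ⟨D, hD⟩
    refine ⟨max C D, (hC.and hD).mono fun r ⟨hCr, hDr⟩ y hy => ?_⟩
    rcases hy with hy | hy
    · exact (hCr y hy).trans (by gcongr; exact le_max_left _ _)
    · exact (hDr y hy).trans (by gcongr; exact le_max_right _ _)
  · intro x _
    obtain ⟨U, hU, hCU⟩ := h x
    exact ⟨U, mem_nhdsWithin_of_mem_nhds hU, hCU⟩

theorem exists_isUpperAhlforsRegular_of_eventually [CompactSpace X] {μ : Measure X} {n : ℕ}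
    {C : ℝ≥0} (h : ∀ᶠ r in 𝓝 0, ∀ y, μ (ball y r) ≤ C * ENNReal.ofReal r ^ n) :
    ∃ D : ℝ≥0, IsUpperAhlforsRegular μ n D := by
  obtain ⟨δ, hδ, hball⟩ : ∃ δ > 0, ∀ r ≤ δ, ∀ y, μ (ball y r) ≤ C * ENNReal.ofReal r ^ n := by
    obtain ⟨ε, hε, hr⟩ := Metric.eventually_nhds_iff.1 h
    refine ⟨ε / 2, half_pos hε, fun r hrε y => ?_⟩
    rcases le_or_gt r 0 with hr0 | hr0
    · simp [ball_eq_empty.2 hr0]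
    · exact hr (by rw [Real.dist_0_eq_abs, abs_of_pos hr0]; linarith) y
  have hfin : μ Set.univ ≠ ⊤ := by
    refine (isCompact_univ.measure_lt_top_of_nhdsWithin fun x _ => ?_).ne
    exact ⟨ball x δ, mem_nhdsWithin_of_mem_nhds (ball_mem_nhds x hδ),
      (hball δ le_rfl x).trans_lt (by finiteness)⟩
  have hδn : ENNReal.ofReal δ ^ n ≠ 0 := pow_ne_zero n (ENNReal.ofReal_pos.2 hδ).ne'
  set D : ENNReal := μ Set.univ / ENNReal.ofReal δ ^ n
  have hD : D ≠ ⊤ := ENNReal.div_ne_top hfin hδn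
  refine ⟨C + D.toNNReal, fun y r => ?_⟩
  rw [ENNReal.coe_add, ENNReal.coe_toNNReal hD, add_mul]
  rcases le_total r δ with hr | hr
  · exact (hball r hr y).trans le_self_add
  · calc μ (ball y r) ≤ μ Set.univ := measure_mono (Set.subset_univ _)
      _ = D * ENNReal.ofReal δ ^ n := (ENNReal.div_mul_cancel hδn (by finiteness)).symm
      _ ≤ D * ENNReal.ofReal r ^ n := by gcongr
      _ ≤ _ := le_add_self

end UpperAhlforsRegular

section HausdorffMeasure

variable {X : Type*} [MetricSpace X] [MeasurableSpace X] [BorelSpace X]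

theorem hausdorffMeasure_le_of_edist_le_on {Y : Type*} [EMetricSpace Y] [MeasurableSpace Y]
    [BorelSpace Y] {f : X → Y} {s : Set X} {K : ℝ≥0} {d : ℝ} (hd : 0 ≤ d)
    (hf : ∀ x ∈ s, ∀ y ∈ s, edist x y ≤ K * edist (f x) (f y)) :
    μH[d] s ≤ K ^ d * μH[d] (f '' s) := by
  have hanti : AntilipschitzWith K fun x : s => f x := fun x y => hf x x.2 y y.2
  have hcoe : Isometry ((↑) : s → X) := isometry_subtype_coe
  calc μH[d] s = μH[d] (Set.univ : Set s) := by
        rw [← hcoe.hausdorffMeasure_image (Or.inl hd), Set.image_univ, Subtype.range_coe]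
    _ ≤ K ^ d * μH[d] ((fun x : s => f x) '' Set.univ) := hanti.le_hausdorffMeasure_image hd _
    _ = K ^ d * μH[d] (f '' s) := by rw [Set.image_univ, Set.image_eq_range]

variable {E : Type*} [NormedAddCommGroup E] [NormedSpace ℝ E] [FiniteDimensional ℝ E]
  [MeasurableSpace E] [BorelSpace E]

theorem hausdorffMeasure_ball_le_of_biLipschitzOn {n : ℕ} (hn : Module.finrank ℝ E = n)
    {f : X → E} {x : X} {r : ℝ} {K K' : ℝ≥0} (hf : LipschitzOnWith K f (ball x r))
    (hf' : ∀ y ∈ ball x r, ∀ z ∈ ball x r, edist y z ≤ K' * edist (f y) (f z)) :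
    μH[(n : ℝ)] (ball x r) ≤
      K' ^ n * K ^ n * μH[(n : ℝ)] (ball (0 : E) 1) * ENNReal.ofReal r ^ n := by
  subst hn
  rcases le_or_gt r 0 with hr | hr
  · simp [ball_eq_empty.2 hr]
  have himage : f '' ball x r ⊆ closedBall (f x) (K * r) := by
    rintro _ ⟨y, hy, rfl⟩
    exact (hf.dist_le_mul y hy x (mem_ball_self hr)).trans (by gcongr; exact (mem_ball.1 hy).le)
  calc μH[(Module.finrank ℝ E : ℝ)] (ball x r)
      ≤ K' ^ Module.finrank ℝ E * μH[(Module.finrank ℝ E : ℝ)] (f '' ball x r) := by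
        simpa only [ENNReal.rpow_natCast] using
          hausdorffMeasure_le_of_edist_le_on (Nat.cast_nonneg _) hf'
    _ ≤ K' ^ Module.finrank ℝ E * μH[(Module.finrank ℝ E : ℝ)] (closedBall (f x) (K * r)) := by
        gcongr
    _ = _ := by
        rw [Measure.addHaar_closedBall _ _ (by positivity), mul_pow,
          ENNReal.ofReal_mul (by positivity), ENNReal.ofReal_pow hr.le,
          ENNReal.ofReal_pow K.coe_nonneg, ENNReal.ofReal_coe_nnreal]
        ring

theorem exists_isUpperAhlforsRegular_hausdorffMeasure [CompactSpace X] {n : ℕ}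
    (hn : Module.finrank ℝ E = n) {f : X → X → E}
    (hf : ∀ x, ∃ ε > 0, ∃ L > 0, ∀ y ∈ ball x ε, ∀ z ∈ ball x ε,
      1 / L * ‖f x y - f x z‖ ≤ dist y z ∧ dist y z ≤ L * ‖f x y - f x z‖) :
    ∃ C, IsUpperAhlforsRegular (μH[(n : ℝ)] : Measure X) n C := by
  suffices hloc : ∀ x : X, ∃ U ∈ 𝓝 x, ∃ C : ℝ≥0, ∀ᶠ r in 𝓝 0, ∀ y ∈ U,
      μH[(n : ℝ)] (ball y r) ≤ C * ENNReal.ofReal r ^ n by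
    obtain ⟨C, hC⟩ := exists_eventually_measure_ball_le hloc
    exact exists_isUpperAhlforsRegular_of_eventually hC
  intro x
  obtain ⟨ε, hε, L, hL, hbilip⟩ := hf x
  lift L to ℝ≥0 using hL.le
  have hlip : LipschitzOnWith L (f x) (ball x ε) := .of_dist_le_mul fun y hy z hz => by
    rw [dist_eq_norm, ← inv_mul_le_iff₀ hL, ← one_div]
    exact (hbilip y hy z hz).1
  have hanti : ∀ y ∈ ball x ε, ∀ z ∈ ball x ε, edist y z ≤ L * edist (f x y) (f x z) := by
    intro y hy z hz
    rw [edist_nndist, edist_nndist]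
    norm_cast
    rw [← NNReal.coe_le_coe, NNReal.coe_mul, coe_nndist, coe_nndist, dist_eq_norm]
    exact (hbilip y hy z hz).2
  have hunit : (μH[(n : ℝ)] : Measure E) (ball 0 1) ≠ ⊤ := by
    subst hn
    exact measure_ball_lt_top.ne
  refine ⟨ball x (ε / 2), ball_mem_nhds x (half_pos hε),
    L ^ n * L ^ n * (μH[(n : ℝ)] (ball (0 : E) 1)).toNNReal, ?_⟩
  filter_upwards [gt_mem_nhds (half_pos hε)] with r hr y hy
  have hsub : ball y r ⊆ ball x ε := ball_subset_ball' (by linarith [mem_ball.1 hy])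
  simpa only [ENNReal.coe_mul, ENNReal.coe_pow, ENNReal.coe_toNNReal hunit] using
    hausdorffMeasure_ball_le_of_biLipschitzOn hn (hlip.mono hsub)
      fun y hy z hz => hanti y (hsub hy) z (hsub hz)

end HausdorffMeasure

section DecayKernel

/-- The size, at distance `d` from its centre, of a bump of mass about one at scale `t` in
dimension `n` with a tail of order `n + m`; for `m = 1` this is comparable to the Poisson kernel.
It stands in for the bounds with `N = 0` and `N = n + m` in the definition of `𝒩_{x,t}`, where
`m = 2`. -/
def decayKernel (n m : ℕ) (t d : ℝ) : ℝ :=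
  t ^ m / (t + d) ^ (n + m)

variable {n m : ℕ} {t d d' δ : ℝ}

theorem decayKernel_nonneg (ht : 0 ≤ t) (hd : 0 ≤ d) : 0 ≤ decayKernel n m t d := by
  unfold decayKernel
  positivity

theorem decayKernel_anti (ht : 0 < t) (hd : 0 ≤ d) (hdd' : d ≤ d') :
    decayKernel n m t d' ≤ decayKernel n m t d := by
  unfold decayKernel
  gcongr

theorem decayKernel_le_inv_pow (ht : 0 < t) (hd : 0 ≤ d) : decayKernel n m t d ≤ (t ^ n)⁻¹ := by
  calc decayKernel n m t d ≤ decayKernel n m t 0 := decayKernel_anti ht le_rfl hd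
    _ = (t ^ n)⁻¹ := by
      rw [decayKernel, add_zero, pow_add]
      field_simp

theorem decayKernel_le_pow_div (ht : 0 ≤ t) (hd : 0 < d) :
    decayKernel n m t d ≤ t ^ m / d ^ (n + m) := by
  unfold decayKernel
  gcongr
  linarith

theorem decayKernel_le_mul_of_le_add (ht : 0 < t) (hd : 0 ≤ d) (hd' : 0 ≤ d')
    (h : d' ≤ t + d) : decayKernel n m t d ≤ 2 ^ (n + m) * decayKernel n m t d' := by
  have hle : t + d' ≤ 2 * (t + d) := by linarith
  calc decayKernel n m t d = 2 ^ (n + m) * (t ^ m / (2 * (t + d)) ^ (n + m)) := by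
        rw [decayKernel, mul_pow]
        field_simp
    _ ≤ 2 ^ (n + m) * decayKernel n m t d' := by
        unfold decayKernel
        gcongr

theorem le_decayKernel {b : ℝ} (ht : 0 < t) (hd : 0 ≤ d) (hb : 0 ≤ b) (h_near : t ^ n * b ≤ 1)
    (h_far : t ^ n * ((d / t) ^ (n + m) * b) ≤ 1) : b ≤ 2 ^ (n + m) * decayKernel n m t d := by
  have hmax : t ^ n * (max 1 (d / t) ^ (n + m) * b) ≤ 1 := by
    rcases max_choice 1 (d / t) with h | h <;> rw [h]
    · simpa only [one_pow, one_mul] using h_near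
    · exact h_far
  have hle : (t + d) / (2 * t) ≤ max 1 (d / t) := by
    have : (t + d) / (2 * t) = (1 + d / t) / 2 := by field_simp
    linarith [le_max_left 1 (d / t), le_max_right 1 (d / t)]
  have hbound : t ^ n * (((t + d) / (2 * t)) ^ (n + m) * b) ≤ 1 := le_trans (by gcongr) hmax
  calc b = t ^ n * (((t + d) / (2 * t)) ^ (n + m) * b) *
        (2 ^ (n + m) * decayKernel n m t d) := by
        rw [decayKernel, div_pow, mul_pow, pow_add t]
        field_simp
    _ ≤ 1 * (2 ^ (n + m) * decayKernel n m t d) := by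
        have := decayKernel_nonneg (n := n) (m := m) ht.le hd
        gcongr
    _ = _ := one_mul _

theorem decayKernel_mul_le (ht : 0 < t) (hδ : 0 ≤ δ) (hd : 0 ≤ d) (hd' : 0 ≤ d')
    (h : 2 * δ ≤ d + d') :
    decayKernel n m t d * decayKernel n m t d' ≤
      decayKernel n m t δ * (decayKernel n m t d + decayKernel n m t d') := by
  have hk := decayKernel_nonneg (n := n) (m := m) ht.le hd
  have hk' := decayKernel_nonneg (n := n) (m := m) ht.le hd'
  have hkδ := decayKernel_nonneg (n := n) (m := m) ht.le hδ
  rw [mul_add]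
  rcases le_or_gt δ d with hδd | hdδ
  · have := mul_le_mul_of_nonneg_right (decayKernel_anti (n := n) (m := m) ht hδ hδd) hk'
    linarith [mul_nonneg hkδ hk]
  · have hδd' : δ ≤ d' := by linarith
    have := mul_le_mul_of_nonneg_left (decayKernel_anti (n := n) (m := m) ht hδ hδd') hk
    linarith [mul_nonneg hkδ hk']

theorem exists_dyadic_decayKernel_le (ht : 0 < t) (hd : 0 ≤ d) :
    ∃ i : ℕ, d < 2 ^ (i + 1) * t ∧ decayKernel n m t d ≤ t ^ m / (2 ^ i * t) ^ (n + m) := by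
  obtain ⟨i, hi, hi'⟩ := exists_nat_pow_near (x := (t + d) / t) (y := 2)
    ((one_le_div ht).2 (by linarith)) one_lt_two
  rw [le_div_iff₀ ht] at hi
  rw [div_lt_iff₀ ht] at hi'
  refine ⟨i, by linarith, ?_⟩
  unfold decayKernel
  gcongr

theorem summable_rpow_mul_decayKernel {a J : ℝ} (ha : 1 < a) (hJn : -n < J) (hJm : J < m)
    (hδ : 0 < δ) :
    Summable fun j : ℤ => a ^ (-(j : ℝ) * J) * decayKernel n m (a ^ j) δ := by
  have ha0 : 0 < a := one_pos.trans ha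
  have hgeom : ∀ {s : ℝ}, s < 0 → Summable fun i : ℕ => (a ^ s) ^ i := fun hs =>
    summable_geometric_of_lt_one (by positivity) (Real.rpow_lt_one_of_one_lt_of_neg ha hs)
  have hnonneg : ∀ j : ℤ, 0 ≤ a ^ (-(j : ℝ) * J) * decayKernel n m (a ^ j) δ := fun j =>
    mul_nonneg (by positivity) (decayKernel_nonneg (by positivity) hδ.le)
  refine .of_nat_of_neg ?_ ?_
  · refine .of_nonneg_of_le (fun i => hnonneg i) (fun i => ?_)
      (hgeom (s := -(n + J)) (by linarith))
    calc a ^ (-((i : ℤ) : ℝ) * J) * decayKernel n m (a ^ (i : ℤ)) δ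
        ≤ a ^ (-((i : ℤ) : ℝ) * J) * ((a ^ (i : ℤ)) ^ n)⁻¹ := by
          gcongr
          exact decayKernel_le_inv_pow (by positivity) hδ.le
      _ = (a ^ (-(n + J))) ^ i := by
          simp only [← Real.rpow_intCast, ← Real.rpow_natCast, ← Real.rpow_mul ha0.le,
            ← Real.rpow_neg ha0.le, ← Real.rpow_add ha0]
          push_cast
          ring_nf
  · refine .of_nonneg_of_le (fun i => hnonneg _) (fun i => ?_)
      ((hgeom (s := J - m) (by linarith)).mul_right (δ ^ (n + m))⁻¹)
    calc a ^ (-((-(i : ℤ) : ℤ) : ℝ) * J) * decayKernel n m (a ^ (-(i : ℤ))) δ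
        ≤ a ^ (-((-(i : ℤ) : ℤ) : ℝ) * J) * ((a ^ (-(i : ℤ))) ^ m / δ ^ (n + m)) := by
          gcongr
          exact decayKernel_le_pow_div (by positivity) hδ
      _ = (a ^ (J - m)) ^ i * (δ ^ (n + m))⁻¹ := by
          rw [div_eq_mul_inv, ← mul_assoc]
          congr 1
          simp only [← Real.rpow_intCast, ← Real.rpow_natCast, ← Real.rpow_mul ha0.le,
            ← Real.rpow_add ha0]
          push_cast
          ring_nf

theorem norm_le_decayKernel_of_mem_NClass {M : Type*} [MetricSpace M]
    [ChartedSpace (EuclideanSpace ℝ (Fin n)) M] {x : M} {Φ : M → ℂ} (ht : 0 < t)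
    (hΦ : Φ ∈ NClass n x t) (y : M) :
    ‖Φ y‖ ≤ 2 ^ (n + 2) * decayKernel n 2 t (dist x y) :=
  le_decayKernel ht dist_nonneg (norm_nonneg _)
    (by simpa only [pow_zero, one_mul] using hΦ.2 y 0 (Nat.zero_le _)) (hΦ.2 y (n + 2) le_rfl)

end DecayKernel

section Integration

variable {X : Type*} [PseudoMetricSpace X] [MeasurableSpace X] {μ : Measure X} {n m : ℕ}
  {C : ℝ≥0} {t : ℝ}

theorem IsUpperAhlforsRegular.ofReal_mul_measure_dyadic_ball_le (hμ : IsUpperAhlforsRegular μ n C)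
    (hm : m ≠ 0) (ht : 0 < t) (y : X) (i : ℕ) :
    ENNReal.ofReal (t ^ m / (2 ^ i * t) ^ (n + m)) * μ (ball y (2 ^ (i + 1) * t)) ≤
      C * 2 ^ n * 2⁻¹ ^ i := by
  have hreal : t ^ m / (2 ^ i * t) ^ (n + m) * (2 ^ (i + 1) * t) ^ n = 2 ^ n * (2⁻¹ ^ i) ^ m := by
    rw [mul_pow (2 ^ i), mul_pow (2 ^ (i + 1)), pow_add _ n m, pow_add t n m, pow_succ, mul_pow,
      inv_pow, inv_pow]
    field_simp
  have hpow : (2⁻¹ ^ i : ℝ) ^ m ≤ 2⁻¹ ^ i :=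
    pow_le_of_le_one (by positivity) (pow_le_one₀ (by norm_num) (by norm_num)) hm
  calc ENNReal.ofReal (t ^ m / (2 ^ i * t) ^ (n + m)) * μ (ball y (2 ^ (i + 1) * t))
      ≤ ENNReal.ofReal (t ^ m / (2 ^ i * t) ^ (n + m)) *
          (C * ENNReal.ofReal (2 ^ (i + 1) * t) ^ n) := by
        gcongr
        exact hμ y _
    _ = C * ENNReal.ofReal (2 ^ n * (2⁻¹ ^ i) ^ m) := by
        rw [← ENNReal.ofReal_pow (by positivity), mul_left_comm,
          ← ENNReal.ofReal_mul (by positivity), hreal]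
    _ ≤ C * ENNReal.ofReal (2 ^ n * 2⁻¹ ^ i) := by gcongr
    _ = C * 2 ^ n * 2⁻¹ ^ i := by
        rw [ENNReal.ofReal_mul (by positivity), ENNReal.ofReal_pow (by norm_num),
          ENNReal.ofReal_pow (by norm_num), ENNReal.ofReal_inv_of_pos two_pos,
          ENNReal.ofReal_ofNat, mul_assoc]

theorem measure_mul_ofReal_decayKernel_le (ht : 0 < t) {s : Set X} (hs : MeasurableSet s)
    {x : X} (hsx : s ⊆ ball x t) (y : X) :
    μ s * ENNReal.ofReal (decayKernel n m t (dist x y)) ≤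
      2 ^ (n + m) * ∫⁻ z in s, ENNReal.ofReal (decayKernel n m t (dist z y)) ∂μ := by
  rw [mul_comm, ← setLIntegral_const, ← lintegral_const_mul' _ _ (by finiteness)]
  refine setLIntegral_mono' hs fun z hz => ?_
  have hzy : dist z y ≤ t + dist x y := by
    linarith [dist_triangle z x y, mem_ball.1 (hsx hz)]
  calc ENNReal.ofReal (decayKernel n m t (dist x y))
      ≤ ENNReal.ofReal (2 ^ (n + m) * decayKernel n m t (dist z y)) :=
        ENNReal.ofReal_le_ofReal (decayKernel_le_mul_of_le_add ht dist_nonneg dist_nonneg hzy)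
    _ = 2 ^ (n + m) * ENNReal.ofReal (decayKernel n m t (dist z y)) := by
        rw [ENNReal.ofReal_mul (by positivity), ENNReal.ofReal_pow two_pos.le,
          ENNReal.ofReal_ofNat]

variable [OpensMeasurableSpace X]

theorem IsUpperAhlforsRegular.lintegral_decayKernel_le (hμ : IsUpperAhlforsRegular μ n C)
    (hm : m ≠ 0) (ht : 0 < t) (y : X) :
    ∫⁻ z, ENNReal.ofReal (decayKernel n m t (dist z y)) ∂μ ≤ C * 2 ^ (n + 1) := by
  set c : ℕ → ENNReal := fun i => ENNReal.ofReal (t ^ m / (2 ^ i * t) ^ (n + m))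
  set B : ℕ → Set X := fun i => ball y (2 ^ (i + 1) * t)
  have hpointwise : ∀ z, ENNReal.ofReal (decayKernel n m t (dist z y)) ≤
      ∑' i, (B i).indicator (fun _ => c i) z := by
    intro z
    obtain ⟨i, hzi, hi⟩ := exists_dyadic_decayKernel_le (n := n) (m := m) ht (dist_nonneg (x := z))
    calc ENNReal.ofReal (decayKernel n m t (dist z y)) ≤ c i := ENNReal.ofReal_le_ofReal hi
      _ = (B i).indicator (fun _ => c i) z := by
        rw [Set.indicator_of_mem (mem_ball.2 hzi)]
      _ ≤ _ := ENNReal.le_tsum i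
  calc ∫⁻ z, ENNReal.ofReal (decayKernel n m t (dist z y)) ∂μ
      ≤ ∫⁻ z, ∑' i, (B i).indicator (fun _ => c i) z ∂μ := lintegral_mono hpointwise
    _ = ∑' i, c i * μ (B i) := by
        rw [lintegral_tsum fun i => (measurable_const.indicator measurableSet_ball).aemeasurable]
        simp only [B, lintegral_indicator_const measurableSet_ball]
    _ ≤ ∑' i, (C * 2 ^ n * 2⁻¹ ^ i : ENNReal) :=
        ENNReal.tsum_le_tsum (hμ.ofReal_mul_measure_dyadic_ball_le hm ht y)
    _ = C * 2 ^ (n + 1) := by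
        rw [ENNReal.tsum_mul_left, ENNReal.tsum_geometric_two, mul_assoc, pow_succ]

variable {κ : Type*} [Fintype κ] {E : κ → Set X} {c : κ → X}

theorem IsUpperAhlforsRegular.sum_measure_mul_ofReal_decayKernel_le
    (hμ : IsUpperAhlforsRegular μ n C) (hm : m ≠ 0) (ht : 0 < t)
    (hEmeas : ∀ k, MeasurableSet (E k)) (hEdisj : Pairwise fun k k' => Disjoint (E k) (E k'))
    (hE : ∀ k, E k ⊆ ball (c k) t) (y : X) :
    ∑ k, μ (E k) * ENNReal.ofReal (decayKernel n m t (dist (c k) y)) ≤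
      C * 2 ^ (2 * n + m + 1) := by
  set P : X → ENNReal := fun z => ENNReal.ofReal (decayKernel n m t (dist z y))
  calc ∑ k, μ (E k) * P (c k) ≤ ∑ k, 2 ^ (n + m) * ∫⁻ z in E k, P z ∂μ :=
        Finset.sum_le_sum fun k _ => measure_mul_ofReal_decayKernel_le ht (hEmeas k) (hE k) y
    _ = 2 ^ (n + m) * ∫⁻ z in ⋃ k, E k, P z ∂μ := by
        rw [lintegral_iUnion hEmeas hEdisj, tsum_fintype, Finset.mul_sum]
    _ ≤ 2 ^ (n + m) * (C * 2 ^ (n + 1)) := by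
        gcongr
        exact (setLIntegral_le_lintegral _ _).trans (hμ.lintegral_decayKernel_le hm ht y)
    _ = C * 2 ^ (2 * n + m + 1) := by ring

theorem IsUpperAhlforsRegular.sum_measureReal_mul_decayKernel_le
    (hμ : IsUpperAhlforsRegular μ n C) (hm : m ≠ 0) (ht : 0 < t)
    (hEmeas : ∀ k, MeasurableSet (E k)) (hEdisj : Pairwise fun k k' => Disjoint (E k) (E k'))
    (hE : ∀ k, E k ⊆ ball (c k) t) (y : X) :
    ∑ k, μ.real (E k) * decayKernel n m t (dist (c k) y) ≤ C * 2 ^ (2 * n + m + 1) := by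
  have hfin : ∀ k, μ (E k) * ENNReal.ofReal (decayKernel n m t (dist (c k) y)) ≠ ⊤ := fun k =>
    ENNReal.mul_ne_top (hμ.measure_ne_top_of_subset_ball (hE k)) ENNReal.ofReal_ne_top
  calc ∑ k, μ.real (E k) * decayKernel n m t (dist (c k) y)
      = (∑ k, μ (E k) * ENNReal.ofReal (decayKernel n m t (dist (c k) y))).toReal := by
        rw [ENNReal.toReal_sum fun k _ => hfin k]
        refine Finset.sum_congr rfl fun k _ => ?_
        rw [ENNReal.toReal_mul, ENNReal.toReal_ofReal (decayKernel_nonneg ht.le dist_nonneg),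
          Measure.real]
    _ ≤ (C * 2 ^ (2 * n + m + 1) : ENNReal).toReal :=
        ENNReal.toReal_mono (by finiteness)
          (hμ.sum_measure_mul_ofReal_decayKernel_le hm ht hEmeas hEdisj hE y)
    _ = C * 2 ^ (2 * n + m + 1) := by
        rw [ENNReal.toReal_mul, ENNReal.toReal_pow, ENNReal.coe_toReal, ENNReal.toReal_ofNat]

theorem IsUpperAhlforsRegular.sum_measureReal_mul_decayKernel_mul_decayKernel_le
    (hμ : IsUpperAhlforsRegular μ n C) (hm : m ≠ 0) (ht : 0 < t)
    (hEmeas : ∀ k, MeasurableSet (E k)) (hEdisj : Pairwise fun k k' => Disjoint (E k) (E k'))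
    (hE : ∀ k, E k ⊆ ball (c k) t) {δ : ℝ} (hδ : 0 ≤ δ) {x y : X} (hxy : 2 * δ ≤ dist x y) :
    ∑ k, μ.real (E k) *
        (decayKernel n m t (dist (c k) x) * decayKernel n m t (dist (c k) y)) ≤
      C * 2 ^ (2 * n + m + 2) * decayKernel n m t δ := by
  have hsum := hμ.sum_measureReal_mul_decayKernel_le hm ht hEmeas hEdisj hE
  calc ∑ k, μ.real (E k) *
        (decayKernel n m t (dist (c k) x) * decayKernel n m t (dist (c k) y))
      ≤ ∑ k, μ.real (E k) * (decayKernel n m t δ *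
          (decayKernel n m t (dist (c k) x) + decayKernel n m t (dist (c k) y))) := by
        refine Finset.sum_le_sum fun k _ => mul_le_mul_of_nonneg_left ?_ measureReal_nonneg
        exact decayKernel_mul_le ht hδ dist_nonneg dist_nonneg
          (hxy.trans (dist_triangle_left x y (c k)))
    _ = decayKernel n m t δ * (∑ k, μ.real (E k) * decayKernel n m t (dist (c k) x) +
          ∑ k, μ.real (E k) * decayKernel n m t (dist (c k) y)) := by
        rw [← Finset.sum_add_distrib, Finset.mul_sum]
        exact Finset.sum_congr rfl fun k _ => by ring
    _ ≤ decayKernel n m t δ * (C * 2 ^ (2 * n + m + 1) + C * 2 ^ (2 * n + m + 1)) := by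
        have := decayKernel_nonneg (n := n) (m := m) ht.le hδ
        gcongr
        · exact hsum x
        · exact hsum y
    _ = C * 2 ^ (2 * n + m + 2) * decayKernel n m t δ := by ring

theorem IsUpperAhlforsRegular.sum_measureReal_mul_mul_le_of_le_decayKernel
    (hμ : IsUpperAhlforsRegular μ n C) (hm : m ≠ 0) (ht : 0 < t)
    (hEmeas : ∀ k, MeasurableSet (E k)) (hEdisj : Pairwise fun k k' => Disjoint (E k) (E k'))
    (hE : ∀ k, E k ⊆ ball (c k) t) {δ : ℝ} (hδ : 0 ≤ δ) {x y : X} (hxy : 2 * δ ≤ dist x y)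
    {A B : ℝ} (hA : 0 ≤ A) (hB : 0 ≤ B) {u v : κ → ℝ} (hv : ∀ k, 0 ≤ v k)
    (hux : ∀ k, u k ≤ A * decayKernel n m t (dist (c k) x))
    (hvy : ∀ k, v k ≤ B * decayKernel n m t (dist (c k) y)) :
    ∑ k, μ.real (E k) * (u k * v k) ≤
      A * B * (C * 2 ^ (2 * n + m + 2)) * decayKernel n m t δ := by
  have hkernel := fun (k : κ) (z : X) =>
    decayKernel_nonneg (n := n) (m := m) ht.le (dist_nonneg (x := c k) (y := z))
  calc ∑ k, μ.real (E k) * (u k * v k)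
      ≤ ∑ k, μ.real (E k) * (A * decayKernel n m t (dist (c k) x) *
          (B * decayKernel n m t (dist (c k) y))) := by
        refine Finset.sum_le_sum fun k _ => mul_le_mul_of_nonneg_left ?_ measureReal_nonneg
        exact mul_le_mul (hux k) (hvy k) (hv k) (mul_nonneg hA (hkernel k x))
    _ = A * B * ∑ k, μ.real (E k) *
          (decayKernel n m t (dist (c k) x) * decayKernel n m t (dist (c k) y)) := by
        rw [Finset.mul_sum]
        exact Finset.sum_congr rfl fun k _ => by ring
    _ ≤ A * B * (C * 2 ^ (2 * n + m + 2) * decayKernel n m t δ) := by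
        gcongr
        exact hμ.sum_measureReal_mul_decayKernel_mul_decayKernel_le hm ht hEmeas hEdisj hE hδ hxy
    _ = A * B * (C * 2 ^ (2 * n + m + 2)) * decayKernel n m t δ := (mul_assoc _ _ _).symm

end Integration

theorem tendstoUniformlyOn_tsum_sigma_of_nonneg {ι Q : Type*} {κ : ι → Type*}
    [∀ i, Fintype (κ i)] {f : (Σ i, κ i) → Q → ℝ} {S : Set Q} {b : ι → ℝ}
    (hf : ∀ p, ∀ q ∈ S, 0 ≤ f p q) (hb : Summable b)
    (hfb : ∀ i, ∀ q ∈ S, ∑ k, f ⟨i, k⟩ q ≤ b i) :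
    TendstoUniformlyOn (fun (s : Finset (Σ i, κ i)) q => ∑ p ∈ s, f p q)
      (fun q => ∑' p, f p q) atTop S := by
  have hblock : ∀ i, ∀ q ∈ S, 0 ≤ ∑ k, f ⟨i, k⟩ q := fun i q hq =>
    Finset.sum_nonneg fun k _ => hf ⟨i, k⟩ q hq
  have hsum : ∀ q ∈ S, Summable fun p => f p q := by
    intro q hq
    have hfq : 0 ≤ fun p => f p q := fun p => hf p q hq
    rw [summable_sigma_of_nonneg hfq]
    simpa only [tsum_fintype] using ⟨fun i => Summable.of_finite,
      Summable.of_nonneg_of_le (fun i => hblock i q hq) (fun i => hfb i q hq) hb⟩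
  have huniform : TendstoUniformlyOn (fun (T : Finset ι) q => ∑ i ∈ T, ∑ k, f ⟨i, k⟩ q)
      (fun q => ∑' i, ∑ k, f ⟨i, k⟩ q) atTop S :=
    tendstoUniformlyOn_tsum hb fun i q hq =>
      (Real.norm_of_nonneg (hblock i q hq)).trans_le (hfb i q hq)
  rw [Metric.tendstoUniformlyOn_iff] at huniform ⊢
  intro ε hε
  obtain ⟨T, hT⟩ := (huniform ε hε).exists
  filter_upwards [eventually_ge_atTop (T.sigma fun _ => Finset.univ)] with s hs q hq
  have hlower : ∑ i ∈ T, ∑ k, f ⟨i, k⟩ q ≤ ∑ p ∈ s, f p q := by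
    rw [← Finset.sum_sigma T (fun _ => Finset.univ) fun p => f p q]
    exact Finset.sum_le_sum_of_subset_of_nonneg hs fun p _ _ => hf p q hq
  have hupper : ∑ p ∈ s, f p q ≤ ∑' p, f p q := (hsum q hq).sum_le_tsum s fun p _ => hf p q hq
  have htotal : ∑' p, f p q = ∑' i, ∑ k, f ⟨i, k⟩ q := by
    simpa only [tsum_fintype] using (hsum q hq).tsum_sigma
  have hTq := hT q hq
  rw [← htotal, Real.dist_eq, abs_of_nonneg (by linarith)] at hTq
  rw [Real.dist_eq, abs_of_nonneg (by linarith)]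
  linarith

theorem statement_9_general {X F G : Type*} [PseudoMetricSpace X] [MeasurableSpace X]
    [OpensMeasurableSpace X] [SeminormedAddGroup F] [SeminormedAddGroup G]
    {μ : Measure X} {n m : ℕ} (hm : m ≠ 0) {C : ℝ≥0} (hμ : IsUpperAhlforsRegular μ n C)
    {a : ℝ} (ha : 1 < a) {κ : ℤ → Type*} [∀ j, Finite (κ j)] {E : (j : ℤ) → κ j → Set X}
    (hEmeas : ∀ j k, MeasurableSet (E j k))
    (hEdisj : ∀ j, Pairwise fun k k' => Disjoint (E j k) (E j k'))
    {c : (j : ℤ) → κ j → X} (hE : ∀ j k, E j k ⊆ ball (c j k) (a ^ j))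
    {A B : ℝ} (hA : 0 ≤ A) (hB : 0 ≤ B)
    {Φ : (j : ℤ) → κ j → X → F} {Ψ : (j : ℤ) → κ j → X → G}
    (hΦ : ∀ j k x, ‖Φ j k x‖ ≤ A * decayKernel n m (a ^ j) (dist (c j k) x))
    (hΨ : ∀ j k y, ‖Ψ j k y‖ ≤ B * decayKernel n m (a ^ j) (dist (c j k) y))
    {J : ℝ} (hJn : -n < J) (hJm : J < m) {η : ℝ} (hη : 0 < η) :
    TendstoUniformlyOn
      (fun (s : Finset (Σ j, κ j)) (q : X × X) => ∑ p ∈ s, a ^ (-(p.1 : ℝ) * J) *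
        (μ.real (E p.1 p.2) * (‖Φ p.1 p.2 q.1‖ * ‖Ψ p.1 p.2 q.2‖)))
      (fun q : X × X => ∑' p : (Σ j, κ j), a ^ (-(p.1 : ℝ) * J) *
        (μ.real (E p.1 p.2) * (‖Φ p.1 p.2 q.1‖ * ‖Ψ p.1 p.2 q.2‖)))
      atTop {q : X × X | η ≤ dist q.1 q.2} := by
  have (j : ℤ) : Fintype (κ j) := Fintype.ofFinite _
  have hscale : ∀ j : ℤ, 0 < a ^ j := zpow_pos (one_pos.trans ha)
  have hweight : ∀ j : ℤ, 0 ≤ a ^ (-(j : ℝ) * J) := fun j =>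
    Real.rpow_nonneg (one_pos.trans ha).le _
  refine tendstoUniformlyOn_tsum_sigma_of_nonneg
    (fun p q _ => mul_nonneg (hweight p.1) (by positivity))
    ((summable_rpow_mul_decayKernel ha hJn hJm (half_pos hη)).mul_left
      (A * B * (C * 2 ^ (2 * n + m + 2)))) fun j q hq => ?_
  have hblock := hμ.sum_measureReal_mul_mul_le_of_le_decayKernel hm (hscale j) (hEmeas j)
    (hEdisj j) (hE j) (half_pos hη).le (by rwa [mul_div_cancel₀ η two_ne_zero]) hA hB
    (fun k => norm_nonneg (Ψ j k q.2)) (fun k => hΦ j k q.1) fun k => hΨ j k q.2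
  dsimp only
  rw [← Finset.mul_sum]
  exact (mul_le_mul_of_nonneg_left hblock (hweight j)).trans_eq (mul_left_comm _ _ _)

/-- **Uniform convergence of the near-diagonal summation away from the diagonal.**
On a smooth compact Riemannian `n`-manifold `M`, with `a > 1`, partitions
`{E_{j,k}}` of `M` into finitely many measurable pieces of diameter `< a^j`,
points `x_{j,k} ∈ E_{j,k}`, functions `Φ_{j,k}, Ψ_{j,k} ∈ 𝒩_{x_{j,k},a^j}` and
`0 ≤ J ≤ 1`, for every `η > 0` the series
`∑_{j,k} a^{−jJ} μ(E_{j,k}) |Φ_{j,k}(x)Ψ_{j,k}(y)|` converges uniformly on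
`{(x,y) : d(x,y) ≥ η}`. -/
theorem statement_9 (n : ℕ) (hn : 1 ≤ n)
    (M : Type*) [MetricSpace M] [CompactSpace M]
    [ChartedSpace (EuclideanSpace ℝ (Fin n)) M] [IsManifold (𝓡 n) (⊤ : ℕ∞) M]
    [MeasurableSpace M] [BorelSpace M]
    -- the geodesic distance is locally bi-Lipschitz comparable to chart coordinates
    (hbilip : ∀ x : M, ∃ ε : ℝ, 0 < ε ∧ ∃ L : ℝ, 0 < L ∧
      ball x ε ⊆ (chartAt (EuclideanSpace ℝ (Fin n)) x).source ∧
      ∀ y ∈ ball x ε, ∀ z ∈ ball x ε,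
        (1 / L) * ‖chartAt (EuclideanSpace ℝ (Fin n)) x y -
            chartAt (EuclideanSpace ℝ (Fin n)) x z‖ ≤ dist y z ∧
        dist y z ≤ L * ‖chartAt (EuclideanSpace ℝ (Fin n)) x y -
            chartAt (EuclideanSpace ℝ (Fin n)) x z‖)
    -- the Riemannian measure is the `n`-dimensional Hausdorff measure of `d`
    (μ : Measure M) (hμ : μ = μH[(n : ℝ)])
    (a : ℝ) (ha : 1 < a)
    (N : ℤ → ℕ) (E : (j : ℤ) → Fin (N j) → Set M)
    (hEmeas : ∀ j k, MeasurableSet (E j k))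
    (hEdisj : ∀ j, Pairwise fun k k' => Disjoint (E j k) (E j k'))
    (hEcover : ∀ j, (⋃ k, E j k) = Set.univ)
    (hEdiam : ∀ j k, Metric.diam (E j k) < a ^ j)
    (xp : (j : ℤ) → Fin (N j) → M) (hxp : ∀ j k, xp j k ∈ E j k)
    (Φ Ψ : (j : ℤ) → Fin (N j) → (M → ℂ))
    (hΦ : ∀ j k, Φ j k ∈ NClass n (xp j k) (a ^ j))
    (hΨ : ∀ j k, Ψ j k ∈ NClass n (xp j k) (a ^ j))
    (J : ℝ) (hJ0 : 0 ≤ J) (hJ1 : J ≤ 1)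
    (η : ℝ) (hη : 0 < η) :
    TendstoUniformlyOn
      (fun (s : Finset ((j : ℤ) × Fin (N j))) (q : M × M) =>
        ∑ p ∈ s, a ^ (-(p.1 : ℝ) * J) * ((μ (E p.1 p.2)).toReal *
          (‖Φ p.1 p.2 q.1‖ * ‖Ψ p.1 p.2 q.2‖)))
      (fun q : M × M =>
        ∑' p : (j : ℤ) × Fin (N j), a ^ (-(p.1 : ℝ) * J) * ((μ (E p.1 p.2)).toReal *
          (‖Φ p.1 p.2 q.1‖ * ‖Ψ p.1 p.2 q.2‖)))
      Filter.atTop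
      {q : M × M | η ≤ dist q.1 q.2} := by
  subst hμ
  obtain ⟨C, hC⟩ := exists_isUpperAhlforsRegular_hausdorffMeasure finrank_euclideanSpace_fin
    fun x => let ⟨ε, hε, L, hL, _, h⟩ := hbilip x; ⟨ε, hε, L, hL, h⟩
  have hscale : ∀ j : ℤ, 0 < a ^ j := zpow_pos (one_pos.trans ha)
  exact statement_9_general two_ne_zero hC ha hEmeas hEdisj
    (fun j k z hz => (dist_le_diam_of_mem isBounded_of_compactSpace hz (hxp j k)).trans_lt
      (hEdiam j k))
    (by positivity) (by positivity)
    (fun j k => norm_le_decayKernel_of_mem_NClass (hscale j) (hΦ j k))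
    (fun j k => norm_le_decayKernel_of_mem_NClass (hscale j) (hΨ j k))
    (by have : (1 : ℝ) ≤ n := mod_cast hn; linarith) (by push_cast; linarith) hη
end
end

section
/- Let S² be the unit sphere in ℝ³ with geodesic distance d and surface measure μ, fix a finite set 𝒫 of smooth real vector fields on S² spanning the tangent space at each point, and set 𝒫₀ = 𝒫 ∪ {identity}. Fix a > 1. Then there exists C₂ > 0 as follows. For each j ∈ ℤ, write S² as a finite disjoint union of measurable sets {E_{j,k} : 1 ≤ k ≤ N_j}, each of diameter less than a^j; select x_{j,k} ∈ E_{j,k}; and select φ_{j,k}, ψ_{j,k} ∈ ℳ_{x_{j,k}, a^j}. Then: (a) for every F ∈ C¹(S²), the series SF = ∑_{j∈ℤ} ∑_{k=1}^{N_j} μ(E_{j,k}) ⟨F, φ_{j,k}⟩ ψ_{j,k} converges absolutely, uniformly on S²; and (b) ‖SF‖_{L²} ≤ C₂ ‖F‖_{L²} for all F ∈ C¹(S²), so that S extends to a bounded operator on L²(S²) with norm at most C₂. -/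
open Metric Manifold MeasureTheory
open scoped RealInnerProductSpace

noncomputable section

abbrev E3 : Type := EuclideanSpace ℝ (Fin 3)

/-- The unit sphere `S² ⊆ ℝ³`. -/
abbrev Sph : Type := Metric.sphere (0 : E3) 1

instance : Fact (Module.finrank ℝ E3 = 2 + 1) := ⟨by simp⟩

/-- The geodesic distance on the sphere, `d(x,y) = arccos⟨x,y⟩`. -/
def gdist (x y : Sph) : ℝ := Real.arccos ⟪(x : E3), (y : E3)⟫

/-- The surface measure on the sphere. -/
def sphMeasure : Measure Sph := (volume : Measure E3).toSphere

/-- A vector field `X` applied to a function `ω : S² → ℂ`, i.e. `(Xω)(x)`. -/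
def mderivApplyS (ω : Sph → ℂ) (x : Sph) (v : TangentSpace (𝓡 2) x) : ℂ :=
  mfderiv (𝓡 2) 𝓘(ℝ, ℂ) ω x v

/-- The class `ℳ_{x,t}`: smooth mean-zero functions `φ` on `S²` such that
`t^{2+deg Y} |(d(x,y)/t)^N (Yφ)(y)| ≤ 1` for all `y ∈ S²`, `Y ∈ 𝒫₀ = 𝒫 ∪ {id}`
and integers `0 ≤ N ≤ 4`, where `𝒫 = {X i}`. -/
def MClass {ι : Type*} (X : ι → (x : Sph) → TangentSpace (𝓡 2) x)
    (x : Sph) (t : ℝ) : Set (Sph → ℂ) :=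
  {φ | ContMDiff (𝓡 2) 𝓘(ℝ, ℂ) (⊤ : ℕ∞) φ ∧
    (∫ y, φ y ∂sphMeasure) = 0 ∧
    (∀ (y : Sph) (N : ℕ), N ≤ 4 → t ^ 2 * ((gdist x y / t) ^ N * ‖φ y‖) ≤ 1) ∧
    (∀ i : ι, ∀ (y : Sph) (N : ℕ), N ≤ 4 →
      t ^ 3 * ((gdist x y / t) ^ N * ‖mderivApplyS φ y (X i y)‖) ≤ 1)}

/-- The inner product `⟨F,φ⟩ = ∫ F φ̄ dμ` on the sphere. -/
def sphInner (F φ : Sph → ℂ) : ℂ := ∫ y, F y * (starRingEnd ℂ) (φ y) ∂sphMeasure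

/-
At each scale `a ^ j` the functions `φ j k` are bumps of width `a ^ j` around the tags `x j k`: they
have mean zero, they are bounded in `L¹` with first moments `O(a ^ j)`, and, weighted by the masses
of the cells, they are summable to `O(1)` pointwise with increments `O(a ^ (-j)) d(y, z)` in total.
The sums over a scale come from comparing `∑ₖ μ(Eₖ) (1 + d(y, xₖ) / t)⁻³` with an integral, and
their increments from the derivative bounds, the fields `X i` controlling every differential by
compactness.

Mean zero against small increments makes the functions of two scales `i ≤ j` almost orthogonal,
with row sums `O(a ^ (i - j))`. Schur's test with the weights `√a ^ j` then shows that the weighted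
families of all scales satisfy Bessel's inequality, so that `S`, the analysis operator of `φ`
followed by the synthesis operator of `ψ`, is bounded on `L²`. For Lipschitz `F` the coefficients
are `O(a ^ j)` at fine scales, while at coarse scales the mean-zero functions `ψ j k` are themselves
`O(a ^ (-j))` in total because the sphere is bounded; hence uniform convergence.
-/

section BesselFamilies

open scoped InnerProductSpace

variable {P : Type*} {m w : P → ℝ} {C : ℝ}

theorem mul_le_half_weighted_sq_add_sq {x y a b : ℝ} (ha : 0 < a) (hb : 0 < b) :
    x * y ≤ (x ^ 2 / a * b + y ^ 2 / b * a) / 2 := by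
  have h : x ^ 2 / a * b + y ^ 2 / b * a - 2 * (x * y) = (x * b - y * a) ^ 2 / (a * b) := by
    field_simp
    ring
  have : 0 ≤ (x * b - y * a) ^ 2 / (a * b) := by positivity
  linarith

theorem sum_sum_mul_le_of_row_sum_le {g : P → P → ℝ} (hg : ∀ p q, 0 ≤ g p q)
    (hsymm : ∀ p q, g p q = g q p) (hm : ∀ p, 0 ≤ m p) (hw : ∀ p, 0 < w p) {s : Finset P}
    (hrow : ∀ p, ∑ q ∈ s, m q * w q * g p q ≤ C * w p) (b : P → ℝ) :
    ∑ p ∈ s, ∑ q ∈ s, m p * b p * (m q * b q) * g p q ≤ C * ∑ p ∈ s, m p * b p ^ 2 := by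
  set r : P → P → ℝ := fun p q => m p * b p ^ 2 / w p * (m q * w q * g p q)
  have hterm : ∀ p q, m p * b p * (m q * b q) * g p q ≤ (r p q + r q p) / 2 := fun p q => by
    have hmg : 0 ≤ m p * m q * g p q := mul_nonneg (mul_nonneg (hm p) (hm q)) (hg p q)
    calc m p * b p * (m q * b q) * g p q = m p * m q * g p q * (b p * b q) := by ring
      _ ≤ m p * m q * g p q * ((b p ^ 2 / w p * w q + b q ^ 2 / w q * w p) / 2) :=
        mul_le_mul_of_nonneg_left (mul_le_half_weighted_sq_add_sq (hw p) (hw q)) hmg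
      _ = (r p q + r q p) / 2 := by simp only [r, hsymm q p]; ring
  have hr : ∑ p ∈ s, ∑ q ∈ s, r p q ≤ C * ∑ p ∈ s, m p * b p ^ 2 := by
    rw [Finset.mul_sum]
    refine Finset.sum_le_sum fun p _ => ?_
    calc ∑ q ∈ s, r p q = m p * b p ^ 2 / w p * ∑ q ∈ s, m q * w q * g p q :=
          Finset.mul_sum .. |>.symm
      _ ≤ m p * b p ^ 2 / w p * (C * w p) :=
        mul_le_mul_of_nonneg_left (hrow p) (div_nonneg (mul_nonneg (hm p) (sq_nonneg _)) (hw p).le)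
      _ = C * (m p * b p ^ 2) := by field_simp [(hw p).ne']
  calc ∑ p ∈ s, ∑ q ∈ s, m p * b p * (m q * b q) * g p q
      ≤ ∑ p ∈ s, ∑ q ∈ s, (r p q + r q p) / 2 :=
        Finset.sum_le_sum fun p _ => Finset.sum_le_sum fun q _ => hterm p q
    _ = (∑ p ∈ s, ∑ q ∈ s, r p q + ∑ p ∈ s, ∑ q ∈ s, r q p) / 2 := by
        simp only [add_div, Finset.sum_add_distrib, Finset.sum_div]
    _ = ∑ p ∈ s, ∑ q ∈ s, r p q := by
        rw [Finset.sum_comm (f := fun p q => r q p), add_self_div_two]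
    _ ≤ C * ∑ p ∈ s, m p * b p ^ 2 := hr

variable {𝕜 H : Type*} [RCLike 𝕜] [NormedAddCommGroup H] [InnerProductSpace 𝕜 H]

variable (𝕜) in
/-- The family `v` of vectors, weighted by `m`, satisfies Bessel's inequality with constant `C`. -/
def IsBesselFamily (m : P → ℝ) (v : P → H) (C : ℝ) : Prop :=
  ∀ (s : Finset P) (h : H), ∑ p ∈ s, m p * ‖⟪v p, h⟫_𝕜‖ ^ 2 ≤ C * ‖h‖ ^ 2

theorem norm_sum_smul_sq_le (hm : ∀ p, 0 ≤ m p) (c : P → 𝕜) (v : P → H) (s : Finset P) :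
    ‖∑ p ∈ s, ((m p : 𝕜) * c p) • v p‖ ^ 2 ≤
      ∑ p ∈ s, ∑ q ∈ s, m p * ‖c p‖ * (m q * ‖c q‖) * ‖⟪v p, v q⟫_𝕜‖ := by
  have hself : ∀ z : H, ‖z‖ ^ 2 = ‖⟪z, z⟫_𝕜‖ := fun z => by simp [inner_self_eq_norm_sq_to_K]
  rw [hself, sum_inner]
  refine (norm_sum_le _ _).trans (Finset.sum_le_sum fun p _ => ?_)
  rw [inner_sum]
  refine (norm_sum_le _ _).trans (Finset.sum_le_sum fun q _ => le_of_eq ?_)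
  simp only [inner_smul_left, inner_smul_right, norm_mul, RCLike.norm_conj, RCLike.norm_ofReal,
    abs_of_nonneg (hm _)]
  ring

/-- Duality with the synthesis bound `‖∑ m p ⟪v p, h⟫ v p‖² ≤ C ∑ m p |⟪v p, h⟫|²`. -/
theorem isBesselFamily_of_row_sum_le {v : P → H} (hm : ∀ p, 0 ≤ m p) (hw : ∀ p, 0 < w p)
    (hC : 0 ≤ C)
    (hrow : ∀ (s : Finset P) (p : P), ∑ q ∈ s, m q * w q * ‖⟪v p, v q⟫_𝕜‖ ≤ C * w p) :
    IsBesselFamily 𝕜 m v C := by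
  intro s h
  set Q : ℝ := ∑ p ∈ s, m p * ‖⟪v p, h⟫_𝕜‖ ^ 2
  set z : H := ∑ p ∈ s, ((m p : 𝕜) * ⟪v p, h⟫_𝕜) • v p
  have hQ : 0 ≤ Q := Finset.sum_nonneg fun p _ => mul_nonneg (hm p) (sq_nonneg _)
  have hzh : ⟪z, h⟫_𝕜 = Q := by
    simp only [z, Q, sum_inner, inner_smul_left, map_mul, RCLike.conj_ofReal, RCLike.ofReal_sum,
      RCLike.ofReal_pow, mul_assoc, RCLike.conj_mul]
  have hQz : Q ≤ ‖z‖ * ‖h‖ := by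
    simpa [hzh, abs_of_nonneg hQ] using norm_inner_le_norm (𝕜 := 𝕜) z h
  have hz : ‖z‖ ^ 2 ≤ C * Q :=
    (norm_sum_smul_sq_le hm _ v s).trans <| sum_sum_mul_le_of_row_sum_le
      (fun _ _ => norm_nonneg _) (fun _ _ => norm_inner_symm _ _) hm hw (hrow s) _
  rcases hQ.eq_or_lt with hQ0 | hQ0
  · rw [← hQ0]; positivity
  refine le_of_mul_le_mul_right ?_ hQ0
  calc Q * Q ≤ (‖z‖ * ‖h‖) * (‖z‖ * ‖h‖) := by gcongr
    _ = ‖z‖ ^ 2 * ‖h‖ ^ 2 := by ring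
    _ ≤ C * Q * ‖h‖ ^ 2 := by gcongr
    _ = C * ‖h‖ ^ 2 * Q := by ring

theorem IsBesselFamily.exists_analysis {v : P → H} (hv : IsBesselFamily 𝕜 m v C)
    (hm : ∀ p, 0 ≤ m p) (hC : 0 ≤ C) :
    ∃ A : H →L[𝕜] lp (fun _ : P => 𝕜) 2, ‖A‖ ≤ √C ∧ ∀ h p, A h p = (√(m p) : 𝕜) * ⟪v p, h⟫_𝕜 := by
  have hnorm : ∀ (h : H) (p : P),
      ‖(√(m p) : 𝕜) * ⟪v p, h⟫_𝕜‖ ^ (2 : ENNReal).toReal = m p * ‖⟪v p, h⟫_𝕜‖ ^ 2 := fun h p => by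
    simp [mul_pow, Real.sq_sqrt (hm p)]
  have hmem : ∀ h : H, Memℓp (fun p => (√(m p) : 𝕜) * ⟪v p, h⟫_𝕜) 2 := fun h =>
    memℓp_gen' (C := C * ‖h‖ ^ 2) fun s => by simpa only [hnorm] using hv s h
  let A : H →ₗ[𝕜] lp (fun _ : P => 𝕜) 2 :=
    { toFun := fun h => ⟨_, hmem h⟩
      map_add' := fun x y => by ext p; simp [inner_add_right, mul_add]; rfl
      map_smul' := fun c x => by ext p; simp [inner_smul_right, mul_left_comm] }
  have hA : ∀ h, ‖A h‖ ≤ √C * ‖h‖ := fun h =>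
    lp.norm_le_of_forall_sum_le (by simp) (by positivity) fun s => by
      simpa [A, hnorm, mul_pow, Real.sq_sqrt hC, Real.sq_sqrt (hm _)] using hv s h
  exact ⟨A.mkContinuous _ hA, A.mkContinuous_norm_le (Real.sqrt_nonneg _) _, fun _ _ => rfl⟩

theorem IsBesselFamily.exists_frame_operator [CompleteSpace H] {u v : P → H}
    (hv : IsBesselFamily 𝕜 m v C) (hu : IsBesselFamily 𝕜 m u C) (hm : ∀ p, 0 ≤ m p) (hC : 0 ≤ C) :
    ∃ S : H →L[𝕜] H, ‖S‖ ≤ C ∧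
      ∀ h, HasSum (fun p => ((m p : 𝕜) * ⟪v p, h⟫_𝕜) • u p) (S h) := by
  classical
  obtain ⟨A, hA, hAv⟩ := hv.exists_analysis hm hC
  obtain ⟨B, hB, hBu⟩ := hu.exists_analysis hm hC
  refine ⟨B.adjoint ∘L A, ?_, fun h => ?_⟩
  · calc ‖B.adjoint ∘L A‖ ≤ ‖B.adjoint‖ * ‖A‖ := ContinuousLinearMap.opNorm_comp_le _ _
      _ ≤ √C * √C := by rw [LinearIsometryEquiv.norm_map]; gcongr
      _ = C := Real.mul_self_sqrt hC
  · refine ((lp.hasSum_single (by simp) (A h)).mapL B.adjoint).congr_fun fun p => ?_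
    have hsqrt : (√(m p) : 𝕜) * √(m p) = m p := by
      rw [← RCLike.ofReal_mul, Real.mul_self_sqrt (hm p)]
    refine ext_inner_right 𝕜 fun x => ?_
    rw [ContinuousLinearMap.adjoint_inner_left, lp.inner_single_left, hAv, hBu, inner_smul_left,
      ← hsqrt]
    simp only [RCLike.inner_apply, map_mul, RCLike.conj_ofReal]
    ring

end BesselFamilies

section UniformSums

variable {J α : Type*} {κ : J → Type*} [∀ j, Fintype (κ j)] {B : J → ℝ}

theorem summable_sigma_of_sum_le {f : (Σ j, κ j) → ℝ} (hf : ∀ p, 0 ≤ f p) (hB : Summable B)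
    (hfB : ∀ j, ∑ k, f ⟨j, k⟩ ≤ B j) : Summable f := by
  refine (summable_sigma_of_nonneg hf).2 ⟨fun j => (hasSum_fintype _).summable, ?_⟩
  exact hB.of_nonneg_of_le (fun j => tsum_nonneg fun k => hf _)
    fun j => (tsum_fintype _).trans_le (hfB j)

theorem sum_sigma_le_tsum {f : (Σ j, κ j) → ℝ} (hf : ∀ p, 0 ≤ f p) (hB : Summable B)
    (hfB : ∀ j, ∑ k, f ⟨j, k⟩ ≤ B j) (s : Finset (Σ j, κ j)) : ∑ p ∈ s, f p ≤ ∑' j, B j := by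
  have hsum := summable_sigma_of_sum_le hf hB hfB
  calc ∑ p ∈ s, f p ≤ ∑' p, f p := hsum.sum_le_tsum s fun p _ => hf p
    _ = ∑' j, ∑ k, f ⟨j, k⟩ := by simp only [hsum.tsum_sigma, tsum_fintype]
    _ ≤ ∑' j, B j := by
      refine Summable.tsum_le_tsum hfB ?_ hB
      simpa only [tsum_fintype] using hsum.sigma

theorem tendstoUniformly_sigma_of_sum_le {f : (Σ j, κ j) → α → ℝ} (hf : ∀ p x, 0 ≤ f p x)
    (hB : Summable B) (hfB : ∀ j x, ∑ k, f ⟨j, k⟩ x ≤ B j) :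
    TendstoUniformly (fun (s : Finset (Σ j, κ j)) x => ∑ p ∈ s, f p x)
      (fun x => ∑' p, f p x) Filter.atTop := by
  classical
  have hsum : ∀ x, Summable fun p => f p x := fun x =>
    summable_sigma_of_sum_le (hf · x) hB (hfB · x)
  have hblocks : TendstoUniformly (fun (t : Finset J) x => ∑ j ∈ t, ∑ k, f ⟨j, k⟩ x)
      (fun x => ∑' j, ∑ k, f ⟨j, k⟩ x) Filter.atTop :=
    tendstoUniformly_tsum hB fun j x =>
      (Real.norm_of_nonneg (Finset.sum_nonneg fun k _ => hf _ x)).trans_le (hfB j x)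
  rw [Metric.tendstoUniformly_iff] at hblocks ⊢
  intro ε hε
  obtain ⟨t, ht⟩ := (hblocks ε hε).exists
  filter_upwards [Filter.eventually_ge_atTop (t.sigma fun _ => Finset.univ)] with s hs x
  have hle : ∑ p ∈ s, f p x ≤ ∑' p, f p x := (hsum x).sum_le_tsum s fun p _ => hf p x
  have hge : ∑ j ∈ t, ∑ k, f ⟨j, k⟩ x ≤ ∑ p ∈ s, f p x := by
    rw [← Finset.sum_sigma t (fun _ => Finset.univ) fun p => f p x]
    exact Finset.sum_le_sum_of_subset_of_nonneg hs fun p _ _ => hf p x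
  have htsum : ∑' p, f p x = ∑' j, ∑ k, f ⟨j, k⟩ x := by
    simp only [(hsum x).tsum_sigma, tsum_fintype]
  have hclose := (le_abs_self _).trans_lt (ht x)
  rw [Real.dist_eq, abs_of_nonneg (sub_nonneg.2 hle)]
  linarith

theorem tendstoUniformly_sum_of_sum_norm {P V : Type*} [NormedAddCommGroup V] [CompleteSpace V]
    {f : P → α → V} (hsum : ∀ x, Summable fun p => ‖f p x‖)
    (hf : TendstoUniformly (fun (s : Finset P) x => ∑ p ∈ s, ‖f p x‖)
      (fun x => ∑' p, ‖f p x‖) Filter.atTop) :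
    TendstoUniformly (fun (s : Finset P) x => ∑ p ∈ s, f p x)
      (fun x => ∑' p, f p x) Filter.atTop := by
  rw [Metric.tendstoUniformly_iff] at hf ⊢
  intro ε hε
  filter_upwards [hf ε hε] with s hs x
  refine lt_of_le_of_lt ?_ (hs x)
  rw [dist_eq_norm, Real.dist_eq, ← (hsum x).sum_add_tsum_compl (s := s),
    ← (hsum x).of_norm.sum_add_tsum_compl (s := s), add_sub_cancel_left, add_sub_cancel_left]
  exact (norm_tsum_le_tsum_norm ((hsum x).subtype _)).trans (le_abs_self _)

theorem exists_hasSum_continuousMap_of_tendstoUniformly {P V : Type*} [TopologicalSpace α]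
    [CompactSpace α] [NormedAddCommGroup V] {g : P → C(α, V)}
    (hg : TendstoUniformly (fun (s : Finset P) x => ∑ p ∈ s, g p x) (fun x => ∑' p, g p x)
      Filter.atTop) : ∃ G : C(α, V), HasSum g G ∧ ∀ x, G x = ∑' p, g p x :=
  ⟨⟨_, hg.continuous (.of_forall fun s => by fun_prop)⟩, by
    rw [HasSum, SummationFilter.unconditional_filter, ContinuousMap.tendsto_iff_tendstoUniformly]
    simpa [ContinuousMap.coe_sum, Finset.sum_apply] using hg, fun _ => rfl⟩

theorem summable_pow_natAbs {b : ℝ} (h0 : 0 ≤ b) (h1 : b < 1) :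
    Summable fun n : ℤ => b ^ n.natAbs := by
  apply Summable.of_nat_of_neg <;> simpa using summable_geometric_of_lt_one h0 h1

end UniformSums

section ScaleFamilies

open scoped InnerProductSpace

variable {α 𝕜 : Type*} [RCLike 𝕜] [MeasurableSpace α] {μ : Measure α}

variable (μ) in
/-- The sesquilinear pairing `∫ F φ̄ dμ` of two functions; it is `sphInner` for `sphMeasure`. -/
def integralInner (F φ : α → 𝕜) : 𝕜 := ∫ y, F y * (starRingEnd 𝕜) (φ y) ∂μ

variable [PseudoMetricSpace α] [CompactSpace α] [BorelSpace α] [IsFiniteMeasure μ]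

theorem integrable_of_continuous {V : Type*} [NormedAddCommGroup V] {f : α → V}
    (hf : Continuous f) : Integrable f μ :=
  hf.integrable_of_hasCompactSupport (HasCompactSupport.of_compactSpace f)

theorem integrable_mul_conj {f g : α → 𝕜} (hf : Continuous f) (hg : Continuous g) :
    Integrable (fun y => f y * (starRingEnd 𝕜) (g y)) μ :=
  integrable_of_continuous (hf.mul (RCLike.continuous_conj.comp hg))

/-- A finite family of continuous mean-zero functions `φ k` which behaves like bumps of width `t`
centred at `x k` and normalised in `L¹`, the weights `m k` being the masses of the cells around the
`x k`. The constant `K` is meant to be independent of the scale `t`. -/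
structure IsScaleFamily (μ : Measure α) {κ : Type*} [Fintype κ] (K t : ℝ) (m : κ → ℝ) (x : κ → α)
    (φ : κ → C(α, 𝕜)) : Prop where
  integral_eq_zero : ∀ k, ∫ y, φ k y ∂μ = 0
  integral_norm_le : ∀ k, ∫ y, ‖φ k y‖ ∂μ ≤ K
  integral_norm_mul_dist_le : ∀ k, ∫ y, ‖φ k y‖ * dist y (x k) ∂μ ≤ K * t
  sum_norm_le : ∀ y, ∑ k, m k * ‖φ k y‖ ≤ K
  sum_norm_sub_le : ∀ y z, ∑ k, m k * ‖φ k y - φ k z‖ ≤ K / t * dist y z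

/-- The mean of `φ` vanishes, so a constant may be subtracted from the other factor. -/
theorem norm_integralInner_le {φ : C(α, 𝕜)} (hφ : ∫ y, φ y ∂μ = 0) (F : C(α, 𝕜)) (c : 𝕜) :
    ‖integralInner μ F φ‖ ≤ ∫ y, ‖φ y‖ * ‖F y - c‖ ∂μ := by
  have hconj : ∫ y, c * (starRingEnd 𝕜) (φ y) ∂μ = 0 := by
    rw [integral_const_mul, integral_conj, hφ, map_zero, mul_zero]
  have hsub : integralInner μ F φ = ∫ y, (F y - c) * (starRingEnd 𝕜) (φ y) ∂μ := by
    simp only [sub_mul]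
    rw [integral_sub (integrable_mul_conj F.continuous φ.continuous)
      (integrable_mul_conj continuous_const φ.continuous), hconj, sub_zero, integralInner]
  rw [hsub]
  refine (norm_integral_le_integral_norm _).trans_eq (integral_congr_ae (.of_forall fun y => ?_))
  simp only [norm_mul, RCLike.norm_conj, mul_comm]

theorem norm_integralInner_le_of_lipschitzWith {φ : C(α, 𝕜)} (hφ : ∫ y, φ y ∂μ = 0)
    {F : C(α, 𝕜)} {L : NNReal} (hF : LipschitzWith L F) (x : α) :
    ‖integralInner μ F φ‖ ≤ L * ∫ y, ‖φ y‖ * dist y x ∂μ := by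
  rw [← integral_const_mul]
  refine (norm_integralInner_le hφ F (F x)).trans (integral_mono
    (integrable_of_continuous (by fun_prop)) (integrable_of_continuous (by fun_prop)) fun y => ?_)
  calc ‖φ y‖ * ‖F y - F x‖ ≤ ‖φ y‖ * (L * dist y x) := by
        gcongr
        rw [← dist_eq_norm]
        exact hF.dist_le_mul y x
    _ = L * (‖φ y‖ * dist y x) := by ring

theorem norm_integralInner_le_norm_mul (F φ : C(α, 𝕜)) :
    ‖integralInner μ F φ‖ ≤ ‖F‖ * ∫ y, ‖φ y‖ ∂μ := by
  rw [← integral_const_mul]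
  refine (norm_integral_le_integral_norm _).trans (integral_mono
    (integrable_mul_conj F.continuous φ.continuous).norm
    (integrable_of_continuous (by fun_prop)) fun y => ?_)
  simp only [norm_mul, RCLike.norm_conj]
  gcongr
  exact F.norm_coe_le_norm y

section RowSums

variable {κ κ' : Type*} [Fintype κ] [Fintype κ'] {K s t : ℝ} {m : κ → ℝ} {x : κ → α}
  {φ : κ → C(α, 𝕜)} {m' : κ' → ℝ} {x' : κ' → α} {φ' : κ' → C(α, 𝕜)}

theorem sum_mul_integral_norm_mul_le (φ : C(α, 𝕜)) {g : κ → α → 𝕜} (hg : ∀ k, Continuous (g k))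
    {b : α → ℝ} (hb : Continuous b) (hgb : ∀ y, ∑ k, m k * ‖g k y‖ ≤ b y) :
    ∑ k, m k * ∫ y, ‖φ y‖ * ‖g k y‖ ∂μ ≤ ∫ y, ‖φ y‖ * b y ∂μ := by
  simp only [← integral_const_mul]
  rw [← integral_finsetSum _ fun k _ => integrable_of_continuous (by fun_prop)]
  refine integral_mono (integrable_of_continuous (by fun_prop))
    (integrable_of_continuous (by fun_prop)) fun y => ?_
  calc ∑ k, m k * (‖φ y‖ * ‖g k y‖) = ‖φ y‖ * ∑ k, m k * ‖g k y‖ := by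
        simp only [Finset.mul_sum, mul_left_comm]
    _ ≤ ‖φ y‖ * b y := by gcongr; exact hgb y

theorem IsScaleFamily.sum_norm_integralInner_le (hφ : IsScaleFamily μ K t m x φ)
    (hφ' : IsScaleFamily μ K s m' x' φ') (hm' : ∀ l, 0 ≤ m' l) (hK : 0 ≤ K) (k : κ) :
    ∑ l, m' l * ‖integralInner μ (φ' l) (φ k)‖ ≤ K ^ 2 := by
  calc ∑ l, m' l * ‖integralInner μ (φ' l) (φ k)‖
      ≤ ∑ l, m' l * ∫ y, ‖φ k y‖ * ‖φ' l y - 0‖ ∂μ := by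
        gcongr with l
        · exact hm' l
        · exact norm_integralInner_le (hφ.integral_eq_zero k) (φ' l) 0
    _ ≤ ∫ y, ‖φ k y‖ * K ∂μ :=
        sum_mul_integral_norm_mul_le (φ k) (fun l => by fun_prop) continuous_const
          fun y => by simpa using hφ'.sum_norm_le y
    _ ≤ K ^ 2 := by
        rw [integral_mul_const, sq]
        gcongr
        exact hφ.integral_norm_le k

theorem IsScaleFamily.sum_norm_integralInner_le_div (hφ : IsScaleFamily μ K t m x φ)
    (hφ' : IsScaleFamily μ K s m' x' φ') (hm' : ∀ l, 0 ≤ m' l) (hK : 0 ≤ K) (hs : 0 < s) (k : κ) :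
    ∑ l, m' l * ‖integralInner μ (φ' l) (φ k)‖ ≤ K ^ 2 * (t / s) := by
  calc ∑ l, m' l * ‖integralInner μ (φ' l) (φ k)‖
      ≤ ∑ l, m' l * ∫ y, ‖φ k y‖ * ‖φ' l y - φ' l (x k)‖ ∂μ := by
        gcongr with l
        · exact hm' l
        · exact norm_integralInner_le (hφ.integral_eq_zero k) (φ' l) _
    _ ≤ ∫ y, ‖φ k y‖ * (K / s * dist y (x k)) ∂μ :=
        sum_mul_integral_norm_mul_le (φ k) (fun l => by fun_prop) (by fun_prop)
          fun y => hφ'.sum_norm_sub_le y (x k)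
    _ = K / s * ∫ y, ‖φ k y‖ * dist y (x k) ∂μ := by
        rw [← integral_const_mul]
        simp only [mul_left_comm]
    _ ≤ K / s * (K * t) := by
        gcongr
        exact hφ.integral_norm_mul_dist_le k
    _ = K ^ 2 * (t / s) := by ring

theorem measureReal_mul_norm_le {φ : C(α, 𝕜)} (hφ : ∫ y, φ y ∂μ = 0) (y : α) :
    μ.real Set.univ * ‖φ y‖ ≤ ∫ z, ‖φ y - φ z‖ ∂μ := by
  have hint : ∫ z, (φ y - φ z) ∂μ = μ.real Set.univ • φ y := by
    rw [integral_sub (integrable_const _) (integrable_of_continuous φ.continuous), hφ, sub_zero,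
      integral_const]
  calc μ.real Set.univ * ‖φ y‖ = ‖∫ z, (φ y - φ z) ∂μ‖ := by
        rw [hint, norm_smul, Real.norm_of_nonneg measureReal_nonneg]
    _ ≤ ∫ z, ‖φ y - φ z‖ ∂μ := norm_integral_le_integral_norm _

theorem IsScaleFamily.sum_norm_le_diam_div [NeZero μ] (hφ : IsScaleFamily μ K t m x φ)
    (hm : ∀ k, 0 ≤ m k) (hK : 0 ≤ K) (ht : 0 < t) (y : α) :
    ∑ k, m k * ‖φ k y‖ ≤ K * Metric.diam (Set.univ : Set α) / t := by
  refine le_of_mul_le_mul_left ?_ (measureReal_univ_pos (μ := μ))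
  calc μ.real Set.univ * ∑ k, m k * ‖φ k y‖ = ∑ k, m k * (μ.real Set.univ * ‖φ k y‖) := by
        simp only [Finset.mul_sum, mul_left_comm]
    _ ≤ ∑ k, m k * ∫ z, ‖φ k y - φ k z‖ ∂μ := by
        gcongr with k
        · exact hm k
        · exact measureReal_mul_norm_le (hφ.integral_eq_zero k) y
    _ = ∫ z, ∑ k, m k * ‖φ k y - φ k z‖ ∂μ := by
        simp only [← integral_const_mul]
        rw [integral_finsetSum _ fun k _ => integrable_of_continuous (by fun_prop)]
    _ ≤ ∫ _, K * Metric.diam (Set.univ : Set α) / t ∂μ := by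
        refine integral_mono (integrable_of_continuous (by fun_prop)) (integrable_const _)
          fun z => (hφ.sum_norm_sub_le y z).trans ?_
        rw [mul_div_right_comm]
        gcongr
        exact Metric.dist_le_diam_of_mem isCompact_univ.isBounded trivial trivial
    _ = μ.real Set.univ * (K * Metric.diam (Set.univ : Set α) / t) := by
        rw [integral_const, smul_eq_mul]

end RowSums

section AllScales

variable {κ : ℤ → Type*} [∀ j, Fintype (κ j)] {K a : ℝ} {m : ∀ j, κ j → ℝ} {x : ∀ j, κ j → α}
  {φ ψ : ∀ j, κ j → C(α, 𝕜)}

theorem zpow_mul_min_one_div_le {b : ℝ} (hb : 0 < b) (i j : ℤ) :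
    b ^ j * min 1 ((b ^ 2) ^ i / (b ^ 2) ^ j) ≤ b ^ i * b⁻¹ ^ (j - i).natAbs := by
  rcases le_total i j with hij | hij <;> obtain ⟨n, rfl⟩ := Int.le.dest hij
  · calc b ^ (i + n) * min 1 ((b ^ 2) ^ i / (b ^ 2) ^ (i + (n : ℤ)))
        ≤ b ^ (i + n) * ((b ^ 2) ^ i / (b ^ 2) ^ (i + (n : ℤ))) := by gcongr; exact min_le_right _ _
      _ = b ^ i * b⁻¹ ^ n := by
        rw [zpow_add₀ hb.ne', zpow_add₀ (by positivity), zpow_natCast, zpow_natCast, inv_pow]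
        field_simp
        ring
      _ = b ^ i * b⁻¹ ^ (i + n - i).natAbs := by simp
  · calc b ^ j * min 1 ((b ^ 2) ^ (j + (n : ℤ)) / (b ^ 2) ^ j) ≤ b ^ j * 1 := by
          gcongr; exact min_le_left _ _
      _ = b ^ (j + n) * b⁻¹ ^ n := by
        rw [zpow_add₀ hb.ne', zpow_natCast, inv_pow]
        field_simp
      _ = b ^ (j + n) * b⁻¹ ^ (j - (j + n)).natAbs := by simp

/-- The Bessel constant of a system of scale families at the scales `a ^ j`, `j ∈ ℤ`. -/
def scaleBesselBound (K a : ℝ) : ℝ := K ^ 2 * ∑' n : ℤ, (√a)⁻¹ ^ n.natAbs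

theorem IsScaleFamily.sum_mul_sqrt_zpow_mul_le (hm : ∀ j k, 0 ≤ m j k) (hK : 0 ≤ K) (ha : 0 < a)
    (hφ : ∀ j, IsScaleFamily μ K (a ^ j) (m j) (x j) (φ j)) (i j : ℤ) (k : κ i) :
    ∑ l, m j l * √a ^ j * ‖integralInner μ (φ j l) (φ i k)‖ ≤
      K ^ 2 * √a ^ i * (√a)⁻¹ ^ (j - i).natAbs := by
  have hb : 0 < √a := Real.sqrt_pos.2 ha
  calc ∑ l, m j l * √a ^ j * ‖integralInner μ (φ j l) (φ i k)‖
      = √a ^ j * ∑ l, m j l * ‖integralInner μ (φ j l) (φ i k)‖ := by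
        rw [Finset.mul_sum]
        exact Finset.sum_congr rfl fun l _ => by ring
    _ ≤ √a ^ j * (K ^ 2 * min 1 (a ^ i / a ^ j)) := by
        gcongr
        rw [mul_min_of_nonneg _ _ (sq_nonneg K), mul_one]
        exact le_min ((hφ i).sum_norm_integralInner_le (hφ j) (hm j) hK k)
          ((hφ i).sum_norm_integralInner_le_div (hφ j) (hm j) hK (zpow_pos ha _) k)
    _ = K ^ 2 * (√a ^ j * min 1 ((√a ^ 2) ^ i / (√a ^ 2) ^ j)) := by
        rw [Real.sq_sqrt ha.le]; ring
    _ ≤ K ^ 2 * (√a ^ i * (√a)⁻¹ ^ (j - i).natAbs) :=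
        mul_le_mul_of_nonneg_left (zpow_mul_min_one_div_le hb i j) (sq_nonneg K)
    _ = K ^ 2 * √a ^ i * (√a)⁻¹ ^ (j - i).natAbs := by ring

theorem scaleBesselBound_nonneg (K a : ℝ) : 0 ≤ scaleBesselBound K a :=
  mul_nonneg (sq_nonneg K) (tsum_nonneg fun n => by positivity)

/-- Schur's test with the weights `√a ^ j`: they balance the decay `a ^ (i - j)` of the row sums
towards coarser scales `j ≥ i` against the mere boundedness towards finer ones. -/
theorem isBesselFamily_of_isScaleFamily (hm : ∀ j k, 0 ≤ m j k) (hK : 0 ≤ K) (ha : 1 < a)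
    (hφ : ∀ j, IsScaleFamily μ K (a ^ j) (m j) (x j) (φ j)) :
    IsBesselFamily 𝕜 (fun p : Σ j, κ j => m p.1 p.2)
      (fun p => ContinuousMap.toLp 2 μ 𝕜 (φ p.1 p.2)) (scaleBesselBound K a) := by
  have hb : 1 < √a := by rwa [Real.lt_sqrt zero_le_one, one_pow]
  have hb0 : 0 < √a := one_pos.trans hb
  have hsum : Summable fun j : ℤ => (√a)⁻¹ ^ j.natAbs :=
    summable_pow_natAbs (inv_nonneg.2 hb0.le) (inv_lt_one_of_one_lt₀ hb)
  refine isBesselFamily_of_row_sum_le (w := fun p => √a ^ p.1) (fun p => hm _ _)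
    (fun p => zpow_pos hb0 _) (scaleBesselBound_nonneg K a) ?_
  rintro s ⟨i, k⟩
  simp only [ContinuousMap.inner_toLp]
  calc ∑ q ∈ s, m q.1 q.2 * √a ^ q.1 * ‖integralInner μ (φ q.1 q.2) (φ i k)‖
      ≤ ∑' j, K ^ 2 * √a ^ i * (√a)⁻¹ ^ (j - i).natAbs :=
        sum_sigma_le_tsum
          (f := fun q => m q.1 q.2 * √a ^ q.1 * ‖integralInner μ (φ q.1 q.2) (φ i k)‖)
          (fun q => mul_nonneg (mul_nonneg (hm _ _) (zpow_nonneg hb0.le _)) (norm_nonneg _))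
          (((Equiv.subRight i).summable_iff.2 hsum).mul_left _)
          (fun j => IsScaleFamily.sum_mul_sqrt_zpow_mul_le hm hK (one_pos.trans ha) hφ i j k) s
    _ = K ^ 2 * √a ^ i * ∑' j : ℤ, (√a)⁻¹ ^ j.natAbs := by
        rw [tsum_mul_left, ← (Equiv.subRight i).tsum_eq fun j : ℤ => (√a)⁻¹ ^ j.natAbs]
        rfl
    _ = scaleBesselBound K a * √a ^ i := by rw [scaleBesselBound]; ring

/-- The term of index `p = (j, k)` in the series `∑ m j k ⟨F, φ j k⟩ ψ j k (y)`. -/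
def scaleTerm (μ : Measure α) (m : ∀ j, κ j → ℝ) (φ ψ : ∀ j, κ j → C(α, 𝕜)) (F : α → 𝕜)
    (p : Σ j, κ j) (y : α) : 𝕜 :=
  m p.1 p.2 * integralInner μ F (φ p.1 p.2) * ψ p.1 p.2 y

omit [CompactSpace α] [BorelSpace α] [IsFiniteMeasure μ] in
theorem sum_norm_scaleTerm_le_mul (hm : ∀ j k, 0 ≤ m j k) {F : α → 𝕜} {j : ℤ} {y : α} {A B : ℝ}
    (hA : 0 ≤ A) (hφA : ∀ k, ‖integralInner μ F (φ j k)‖ ≤ A)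
    (hψB : ∑ k, m j k * ‖ψ j k y‖ ≤ B) : ∑ k, ‖scaleTerm μ m φ ψ F ⟨j, k⟩ y‖ ≤ A * B := by
  calc ∑ k, ‖scaleTerm μ m φ ψ F ⟨j, k⟩ y‖
      = ∑ k, ‖integralInner μ F (φ j k)‖ * (m j k * ‖ψ j k y‖) :=
        Finset.sum_congr rfl fun k _ => by
          simp only [scaleTerm, norm_mul, RCLike.norm_ofReal, abs_of_nonneg (hm j k)]
          ring
    _ ≤ ∑ k, A * (m j k * ‖ψ j k y‖) := by
        gcongr with k
        · exact mul_nonneg (hm j k) (norm_nonneg _)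
        · exact hφA k
    _ = A * ∑ k, m j k * ‖ψ j k y‖ := (Finset.mul_sum ..).symm
    _ ≤ A * B := by gcongr

theorem sum_norm_scaleTerm_le [NeZero μ] (hm : ∀ j k, 0 ≤ m j k) (hK : 0 ≤ K) (ha : 1 < a)
    (hφ : ∀ j, IsScaleFamily μ K (a ^ j) (m j) (x j) (φ j))
    (hψ : ∀ j, IsScaleFamily μ K (a ^ j) (m j) (x j) (ψ j))
    {F : C(α, 𝕜)} {L : NNReal} (hF : LipschitzWith L F) (j : ℤ) (y : α) :
    ∑ k, ‖scaleTerm μ m φ ψ F ⟨j, k⟩ y‖ ≤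
      K ^ 2 * (L + ‖F‖ * Metric.diam (Set.univ : Set α)) * a⁻¹ ^ j.natAbs := by
  have ha0 : 0 < a := one_pos.trans ha
  have : 0 ≤ Metric.diam (Set.univ : Set α) := Metric.diam_nonneg
  rcases le_total 0 j with hj | hj <;> obtain ⟨n, hn⟩ := Int.le.dest hj
  · refine (sum_norm_scaleTerm_le_mul hm (A := ‖F‖ * K) (by positivity) (fun k => ?_)
      ((hψ j).sum_norm_le_diam_div (hm j) hK (zpow_pos ha0 j) y)).trans ?_
    · exact (norm_integralInner_le_norm_mul F (φ j k)).trans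
        (mul_le_mul_of_nonneg_left ((hφ j).integral_norm_le k) (norm_nonneg F))
    · obtain rfl : j = n := by omega
      calc ‖F‖ * K * (K * Metric.diam (Set.univ : Set α) / a ^ (n : ℤ))
          = K ^ 2 * (‖F‖ * Metric.diam (Set.univ : Set α)) * a⁻¹ ^ n := by
            rw [zpow_natCast, inv_pow]; ring
        _ ≤ K ^ 2 * (L + ‖F‖ * Metric.diam (Set.univ : Set α)) * a⁻¹ ^ n := by
            gcongr; exact le_add_of_nonneg_left L.2
  · refine (sum_norm_scaleTerm_le_mul hm (A := L * (K * a ^ j)) (by positivity) (fun k => ?_)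
      ((hψ j).sum_norm_le y)).trans ?_
    · exact (norm_integralInner_le_of_lipschitzWith ((hφ j).integral_eq_zero k) hF (x j k)).trans
        (mul_le_mul_of_nonneg_left ((hφ j).integral_norm_mul_dist_le k) L.2)
    · obtain rfl : j = -n := by omega
      calc L * (K * a ^ (-n : ℤ)) * K = K ^ 2 * L * a⁻¹ ^ n := by
            rw [zpow_neg, zpow_natCast, inv_pow]; ring
        _ ≤ K ^ 2 * (L + ‖F‖ * Metric.diam (Set.univ : Set α)) * a⁻¹ ^ n := by
            gcongr; exact le_add_of_nonneg_right (by positivity)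
        _ = _ := by simp

theorem summable_norm_scaleTerm [NeZero μ] (hm : ∀ j k, 0 ≤ m j k) (hK : 0 ≤ K) (ha : 1 < a)
    (hφ : ∀ j, IsScaleFamily μ K (a ^ j) (m j) (x j) (φ j))
    (hψ : ∀ j, IsScaleFamily μ K (a ^ j) (m j) (x j) (ψ j))
    {F : C(α, 𝕜)} {L : NNReal} (hF : LipschitzWith L F) (y : α) :
    Summable fun p => ‖scaleTerm μ m φ ψ F p y‖ :=
  summable_sigma_of_sum_le (fun _ => norm_nonneg _)
    ((summable_pow_natAbs (by positivity) (inv_lt_one_of_one_lt₀ ha)).mul_left _)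
    fun j => sum_norm_scaleTerm_le hm hK ha hφ hψ hF j y

theorem tendstoUniformly_sum_norm_scaleTerm [NeZero μ] (hm : ∀ j k, 0 ≤ m j k) (hK : 0 ≤ K)
    (ha : 1 < a) (hφ : ∀ j, IsScaleFamily μ K (a ^ j) (m j) (x j) (φ j))
    (hψ : ∀ j, IsScaleFamily μ K (a ^ j) (m j) (x j) (ψ j))
    {F : C(α, 𝕜)} {L : NNReal} (hF : LipschitzWith L F) :
    TendstoUniformly (fun (s : Finset (Σ j, κ j)) y => ∑ p ∈ s, ‖scaleTerm μ m φ ψ F p y‖)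
      (fun y => ∑' p, ‖scaleTerm μ m φ ψ F p y‖) Filter.atTop :=
  tendstoUniformly_sigma_of_sum_le (fun _ _ => norm_nonneg _)
    ((summable_pow_natAbs (by positivity) (inv_lt_one_of_one_lt₀ ha)).mul_left _)
    fun j y => sum_norm_scaleTerm_le hm hK ha hφ hψ hF j y

theorem exists_scale_operator [NeZero μ] (hm : ∀ j k, 0 ≤ m j k) (hK : 0 ≤ K) (ha : 1 < a)
    (hφ : ∀ j, IsScaleFamily μ K (a ^ j) (m j) (x j) (φ j))
    (hψ : ∀ j, IsScaleFamily μ K (a ^ j) (m j) (x j) (ψ j)) :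
    ∃ S : Lp 𝕜 2 μ →L[𝕜] Lp 𝕜 2 μ, ‖S‖ ≤ scaleBesselBound K a ∧
      ∀ (F : C(α, 𝕜)) (L : NNReal), LipschitzWith L F →
        S (ContinuousMap.toLp 2 μ 𝕜 F) =ᵐ[μ] fun y => ∑' p, scaleTerm μ m φ ψ F p y := by
  obtain ⟨S, hS, hsum⟩ := (isBesselFamily_of_isScaleFamily hm hK ha hφ).exists_frame_operator
    (isBesselFamily_of_isScaleFamily hm hK ha hψ) (fun _ => hm _ _) (scaleBesselBound_nonneg K a)
  refine ⟨S, hS, fun F L hF => ?_⟩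
  obtain ⟨G, hG, hGF⟩ := exists_hasSum_continuousMap_of_tendstoUniformly
    (g := fun p : Σ j, κ j => ((m p.1 p.2 : 𝕜) * integralInner μ F (φ p.1 p.2)) • ψ p.1 p.2)
    (tendstoUniformly_sum_of_sum_norm (summable_norm_scaleTerm hm hK ha hφ hψ hF)
      (tendstoUniformly_sum_norm_scaleTerm hm hK ha hφ hψ hF))
  have hSG : S (ContinuousMap.toLp 2 μ 𝕜 F) = ContinuousMap.toLp 2 μ 𝕜 G := by
    refine (hsum _).unique ?_
    simpa only [ContinuousMap.inner_toLp, integralInner, map_smul] using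
      hG.mapL (ContinuousMap.toLp 2 μ 𝕜)
  rw [hSG]
  filter_upwards [ContinuousMap.coeFn_toLp (p := 2) (𝕜 := 𝕜) μ G] with y hy
  exact hy.trans (hGF y)

end AllScales

end ScaleFamilies

section DecayWeights

variable {α : Type*} [PseudoMetricSpace α] {n Q : ℕ} {t C : ℝ}

/-- The weight `(1 + d(x, y) / t)⁻ⁿ`, which decays polynomially away from `x` at scale `t`. -/
def decayWeight (n : ℕ) (t : ℝ) (x y : α) : ℝ := ((1 + dist y x / t) ^ n)⁻¹

theorem decayWeight_pos (n : ℕ) (ht : 0 < t) (x y : α) : 0 < decayWeight n t x y := by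
  unfold decayWeight
  positivity

theorem continuous_decayWeight (n : ℕ) (ht : 0 < t) (x : α) : Continuous (decayWeight n t x) :=
  Continuous.inv₀ (by fun_prop) fun y => by positivity

theorem decayWeight_le_two_pow_mul (n : ℕ) (ht : 0 < t) {x y z : α} (hz : dist z x ≤ t) :
    decayWeight n t x y ≤ 2 ^ n * decayWeight n t y z := by
  have htri : dist z y ≤ t + dist y x :=
    (dist_triangle z x y).trans (add_le_add hz (dist_comm x y).le)
  have hbase : 1 + dist z y / t ≤ 2 * (1 + dist y x / t) := by
    have : dist z y / t ≤ 1 + dist y x / t := by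
      rw [div_le_iff₀ ht, add_mul, div_mul_cancel₀ _ ht.ne', one_mul]
      exact htri
    have : 0 ≤ dist y x / t := by positivity
    linarith
  have hpow : (1 + dist z y / t) ^ n ≤ 2 ^ n * (1 + dist y x / t) ^ n := by
    rw [← mul_pow]
    gcongr
  unfold decayWeight
  rw [← div_eq_mul_inv, le_div_iff₀ (by positivity), inv_mul_le_iff₀ (by positivity), mul_comm]
  exact hpow

theorem mul_one_add_le_mul_decayWeight {A b : ℝ} (ht : 0 < t) {x y : α}
    (h : t ^ Q * (b * (1 + dist y x / t) ^ (Q + 2)) ≤ A) :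
    b * (1 + dist y x / t) ≤ A / t ^ Q * decayWeight (Q + 1) t x y := by
  have : 0 < 1 + dist y x / t := by positivity
  rw [decayWeight, ← div_eq_mul_inv, div_div, le_div_iff₀ (by positivity)]
  calc b * (1 + dist y x / t) * (t ^ Q * (1 + dist y x / t) ^ (Q + 1))
      = t ^ Q * (b * (1 + dist y x / t) ^ (Q + 2)) := by ring
    _ ≤ A := h

theorem ofReal_decayWeight_le_tsum_indicator (Q : ℕ) (ht : 0 < t) (x y : α) :
    ENNReal.ofReal (decayWeight (Q + 1) t x y) ≤
      ∑' n : ℕ, (Metric.ball x (2 ^ (n + 1) * t)).indicator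
        (fun _ => ENNReal.ofReal ((2 ^ n) ^ (Q + 1))⁻¹) y := by
  have h1 : 1 ≤ 1 + dist y x / t := le_add_of_nonneg_right (by positivity)
  obtain ⟨n, hn, hn'⟩ := exists_nat_pow_near h1 one_lt_two
  have hy : y ∈ Metric.ball x (2 ^ (n + 1) * t) := by
    rw [Metric.mem_ball, ← div_lt_iff₀ ht]
    linarith
  refine le_trans ?_ (ENNReal.le_tsum n)
  rw [Set.indicator_of_mem hy]
  unfold decayWeight
  gcongr

variable [MeasurableSpace α] {μ : Measure α}

/-- Upper Ahlfors regularity of dimension `Q`. -/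
def IsUpperRegular (μ : Measure α) (Q : ℕ) (C : ℝ) : Prop :=
  ∀ (x : α) (r : ℝ), 0 < r → μ (Metric.ball x r) ≤ ENNReal.ofReal (C * r ^ Q)

theorem IsUpperRegular.ofReal_mul_measure_ball_le (hμ : IsUpperRegular μ Q C) (ht : 0 < t) (x : α)
    (n : ℕ) :
    ENNReal.ofReal ((2 ^ n) ^ (Q + 1))⁻¹ * μ (Metric.ball x (2 ^ (n + 1) * t)) ≤
      ENNReal.ofReal (2 ^ Q * C * t ^ Q * (1 / 2) ^ n) := by
  calc _ ≤ ENNReal.ofReal ((2 ^ n) ^ (Q + 1))⁻¹ * ENNReal.ofReal (C * (2 ^ (n + 1) * t) ^ Q) := by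
        gcongr
        exact hμ x _ (by positivity)
    _ = ENNReal.ofReal (2 ^ Q * C * t ^ Q * (1 / 2) ^ n) := by
        rw [← ENNReal.ofReal_mul (by positivity)]
        congr 1
        rw [one_div, inv_pow, pow_succ 2 n, mul_pow, mul_pow]
        field_simp
        ring

theorem IsUpperRegular.integral_decayWeight_le [OpensMeasurableSpace α] (hμ : IsUpperRegular μ Q C)
    (hC : 0 ≤ C) (ht : 0 < t) (x : α) :
    ∫ y, decayWeight (Q + 1) t x y ∂μ ≤ 2 ^ (Q + 1) * C * t ^ Q := by
  have hgeom : HasSum (fun n : ℕ => 2 ^ Q * C * t ^ Q * ((1 : ℝ) / 2) ^ n)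
      (2 ^ Q * C * t ^ Q * 2) := hasSum_geometric_two.mul_left _
  rw [integral_eq_lintegral_of_nonneg_ae (.of_forall fun y => (decayWeight_pos _ ht x y).le)
    (continuous_decayWeight _ ht x).aestronglyMeasurable]
  refine ENNReal.toReal_le_of_le_ofReal (by positivity) ?_
  calc ∫⁻ y, ENNReal.ofReal (decayWeight (Q + 1) t x y) ∂μ
      ≤ ∫⁻ y, ∑' n : ℕ, (Metric.ball x (2 ^ (n + 1) * t)).indicator
          (fun _ => ENNReal.ofReal ((2 ^ n) ^ (Q + 1))⁻¹) y ∂μ :=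
        lintegral_mono fun y => ofReal_decayWeight_le_tsum_indicator Q ht x y
    _ = ∑' n : ℕ, ENNReal.ofReal ((2 ^ n) ^ (Q + 1))⁻¹ * μ (Metric.ball x (2 ^ (n + 1) * t)) := by
        rw [lintegral_tsum fun n =>
          (measurable_const.indicator Metric.isOpen_ball.measurableSet).aemeasurable]
        simp only [lintegral_indicator Metric.isOpen_ball.measurableSet, setLIntegral_const]
    _ ≤ ∑' n : ℕ, ENNReal.ofReal (2 ^ Q * C * t ^ Q * (1 / 2) ^ n) :=
        ENNReal.tsum_le_tsum (hμ.ofReal_mul_measure_ball_le ht x)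
    _ = ENNReal.ofReal (2 ^ (Q + 1) * C * t ^ Q) := by
        rw [← ENNReal.ofReal_tsum_of_nonneg (fun n => by positivity) hgeom.summable, hgeom.tsum_eq]
        congr 1
        ring

/-- A measurable partition of `α` into cells `E k` tagged by points `x k`, with mesh `t`. -/
structure IsTaggedPartition {κ : Type*} (E : κ → Set α) (x : κ → α) (t : ℝ) : Prop where
  measurableSet : ∀ k, MeasurableSet (E k)
  pairwise_disjoint : Pairwise fun k l => Disjoint (E k) (E l)
  iUnion_eq_univ : ⋃ k, E k = Set.univ
  subset_ball : ∀ k, E k ⊆ Metric.ball (x k) t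

variable {κ : Type*} [Fintype κ] {E : κ → Set α} {x : κ → α}

theorem IsTaggedPartition.sum_measureReal_mul_decayWeight_le [CompactSpace α] [BorelSpace α]
    [IsFiniteMeasure μ] (hE : IsTaggedPartition E x t) (ht : 0 < t) (n : ℕ) (y : α) :
    ∑ k, μ.real (E k) * decayWeight n t (x k) y ≤ 2 ^ n * ∫ z, decayWeight n t y z ∂μ := by
  have hint : Integrable (fun z => 2 ^ n * decayWeight n t y z) μ :=
    integrable_of_continuous (continuous_const.mul (continuous_decayWeight n ht y))
  calc ∑ k, μ.real (E k) * decayWeight n t (x k) y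
      = ∑ k, ∫ _ in E k, decayWeight n t (x k) y ∂μ := by simp only [setIntegral_const, smul_eq_mul]
    _ ≤ ∑ k, ∫ z in E k, 2 ^ n * decayWeight n t y z ∂μ :=
        Finset.sum_le_sum fun k _ => setIntegral_mono_on (integrable_const _) hint.integrableOn
          (hE.measurableSet k) fun z hz =>
            decayWeight_le_two_pow_mul n ht (Metric.mem_ball.1 (hE.subset_ball k hz)).le
    _ = 2 ^ n * ∫ z, decayWeight n t y z ∂μ := by
        rw [← integral_iUnion_fintype hE.measurableSet hE.pairwise_disjoint
          fun k => hint.integrableOn, hE.iUnion_eq_univ, setIntegral_univ, integral_const_mul]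

variable [CompactSpace α] [BorelSpace α] [IsFiniteMeasure μ]

theorem IsUpperRegular.sum_measureReal_mul_le (hμ : IsUpperRegular μ Q C) (hC : 0 ≤ C)
    (hE : IsTaggedPartition E x t) (ht : 0 < t) {A : ℝ} {b : κ → ℝ} (hb : ∀ k, 0 ≤ b k)
    {y : α} (hbA : ∀ k, t ^ Q * (b k * (1 + dist y (x k) / t) ^ (Q + 2)) ≤ A) (hA : 0 ≤ A) :
    ∑ k, μ.real (E k) * b k ≤ A * (4 ^ (Q + 1) * C) := by
  have hbW : ∀ k, b k ≤ A / t ^ Q * decayWeight (Q + 1) t (x k) y := fun k =>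
    (le_mul_of_one_le_right (hb k) (le_add_of_nonneg_right (by positivity))).trans
      (mul_one_add_le_mul_decayWeight ht (hbA k))
  calc ∑ k, μ.real (E k) * b k
      ≤ ∑ k, μ.real (E k) * (A / t ^ Q * decayWeight (Q + 1) t (x k) y) := by
        gcongr with k
        exact hbW k
    _ = A / t ^ Q * ∑ k, μ.real (E k) * decayWeight (Q + 1) t (x k) y := by
        simp only [Finset.mul_sum, mul_left_comm]
    _ ≤ A / t ^ Q * (2 ^ (Q + 1) * (2 ^ (Q + 1) * C * t ^ Q)) := by
        gcongr
        refine (hE.sum_measureReal_mul_decayWeight_le ht _ y).trans ?_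
        gcongr
        exact hμ.integral_decayWeight_le hC ht y
    _ = A * (4 ^ (Q + 1) * C) := by
        rw [show (4 : ℝ) = 2 * 2 by norm_num, mul_pow]
        field_simp

theorem IsUpperRegular.integral_mul_one_add_le (hμ : IsUpperRegular μ Q C) (hC : 0 ≤ C)
    (ht : 0 < t) {A : ℝ} {b : α → ℝ} (hbc : Continuous b) {x : α}
    (hbA : ∀ y, t ^ Q * (b y * (1 + dist y x / t) ^ (Q + 2)) ≤ A) (hA : 0 ≤ A) :
    ∫ y, b y * (1 + dist y x / t) ∂μ ≤ A * (4 ^ (Q + 1) * C) := by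
  calc ∫ y, b y * (1 + dist y x / t) ∂μ
      ≤ ∫ y, A / t ^ Q * decayWeight (Q + 1) t x y ∂μ :=
        integral_mono (integrable_of_continuous (by fun_prop))
          (integrable_of_continuous (continuous_const.mul (continuous_decayWeight _ ht x)))
          fun y => mul_one_add_le_mul_decayWeight ht (hbA y)
    _ ≤ A / t ^ Q * (2 ^ (Q + 1) * C * t ^ Q) := by
        rw [integral_const_mul]
        gcongr
        exact hμ.integral_decayWeight_le hC ht x
    _ = A * (2 ^ (Q + 1) * C) := by field_simp
    _ ≤ A * (4 ^ (Q + 1) * C) := by gcongr; norm_num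

theorem IsUpperRegular.isScaleFamily {𝕜 : Type*} [RCLike 𝕜] {φ : κ → C(α, 𝕜)} {A K : ℝ}
    (hμ : IsUpperRegular μ Q C) (hC : 0 ≤ C) (hE : IsTaggedPartition E x t) (ht : 0 < t)
    (hA : 0 ≤ A) (hAK : A * (4 ^ (Q + 1) * C) ≤ K) (hmean : ∀ k, ∫ y, φ k y ∂μ = 0)
    (hdecay : ∀ k y, t ^ Q * (‖φ k y‖ * (1 + dist y (x k) / t) ^ (Q + 2)) ≤ A)
    (hosc : ∀ y z, ∑ k, μ.real (E k) * ‖φ k y - φ k z‖ ≤ K / t * dist y z) :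
    IsScaleFamily μ K t (fun k => μ.real (E k)) x φ := by
  have hint : ∀ k, ∫ y, ‖φ k y‖ * (1 + dist y (x k) / t) ∂μ ≤ K := fun k =>
    (hμ.integral_mul_one_add_le hC ht (by fun_prop) (hdecay k) hA).trans hAK
  refine ⟨hmean, fun k => (integral_mono (integrable_of_continuous (by fun_prop))
    (integrable_of_continuous (by fun_prop)) fun y => ?_).trans (hint k), fun k => ?_, fun y =>
      (hμ.sum_measureReal_mul_le hC hE ht (fun _ => norm_nonneg _) (hdecay · y) hA).trans hAK, hosc⟩
  · exact le_mul_of_one_le_right (norm_nonneg _) (le_add_of_nonneg_right (by positivity))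
  · calc ∫ y, ‖φ k y‖ * dist y (x k) ∂μ ≤ ∫ y, ‖φ k y‖ * (1 + dist y (x k) / t) * t ∂μ := by
          refine integral_mono (integrable_of_continuous (by fun_prop))
            (integrable_of_continuous (by fun_prop)) fun y => ?_
          have : dist y (x k) ≤ (1 + dist y (x k) / t) * t := by
            rw [add_mul, div_mul_cancel₀ _ ht.ne']
            linarith
          rw [mul_assoc]
          gcongr
      _ = (∫ y, ‖φ k y‖ * (1 + dist y (x k) / t) ∂μ) * t := integral_mul_const _ _
      _ ≤ K * t := by gcongr; exact hint k

end DecayWeights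

section SphereMeasure

open scoped Pointwise

variable {E : Type*} [NormedAddCommGroup E] [NormedSpace ℝ E]

theorem Ioo_smul_ball_subset_biUnion_ball (y : sphere (0 : E) 1) {r : ℝ} (hr : 0 < r) :
    Set.Ioo (0 : ℝ) 1 • ((↑) '' ball y r : Set E) ⊆
      ⋃ i ∈ Finset.range ⌈1 / r⌉₊, ball ((i * r) • (y : E)) (2 * r) := by
  rintro _ ⟨τ, ⟨hτ0, hτ1⟩, _, ⟨z, hz, rfl⟩, rfl⟩
  have hτr : 0 ≤ τ / r := by positivity
  have hi : (⌊τ / r⌋₊ : ℝ) * r ≤ τ := (le_div_iff₀ hr).1 (Nat.floor_le hτr)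
  have hi' : τ < (⌊τ / r⌋₊ + 1) * r := (div_lt_iff₀ hr).1 (Nat.lt_floor_add_one _)
  have hlt : ⌊τ / r⌋₊ < ⌈1 / r⌉₊ := by
    rw [← Nat.cast_lt (α := ℝ)]
    exact (Nat.floor_le hτr).trans_lt ((div_lt_div_of_pos_right hτ1 hr).trans_le (Nat.le_ceil _))
  refine Set.mem_biUnion (Finset.mem_range.2 hlt) ?_
  have hzy : ‖(z : E) - y‖ < r := by
    rwa [← dist_eq_norm, ← Subtype.dist_eq, ← mem_ball]
  rw [mem_ball, dist_eq_norm]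
  calc ‖τ • (z : E) - (⌊τ / r⌋₊ * r) • (y : E)‖
      = ‖τ • ((z : E) - y) + (τ - ⌊τ / r⌋₊ * r) • (y : E)‖ := by
        rw [smul_sub, sub_smul, sub_add_sub_cancel]
    _ ≤ τ * ‖(z : E) - y‖ + (τ - ⌊τ / r⌋₊ * r) := by
        refine (norm_add_le _ _).trans_eq ?_
        rw [norm_smul, norm_smul, norm_eq_of_mem_sphere, Real.norm_of_nonneg hτ0.le,
          Real.norm_of_nonneg (sub_nonneg.2 hi), mul_one]
    _ < 2 * r := by nlinarith [mul_le_of_le_one_left (norm_nonneg ((z : E) - y)) hτ1.le]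

variable [FiniteDimensional ℝ E] [MeasurableSpace E] [BorelSpace E] (μ : Measure E)
  [μ.IsAddHaarMeasure] {Q : ℕ}

theorem addHaar_Ioo_smul_ball_le (hQ : Module.finrank ℝ E = Q + 1) (y : sphere (0 : E) 1) {r : ℝ}
    (hr : 0 < r) (hr1 : r ≤ 1) :
    μ (Set.Ioo (0 : ℝ) 1 • ((↑) '' ball y r : Set E)) ≤
      ENNReal.ofReal (2 ^ (Q + 2) * r ^ Q) * μ (ball 0 1) := by
  have hceil : (⌈1 / r⌉₊ : ℝ) ≤ 2 / r := by
    have : 1 ≤ 1 / r := (one_le_div hr).2 hr1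
    calc (⌈1 / r⌉₊ : ℝ) ≤ 1 / r + 1 := (Nat.ceil_lt_add_one (by positivity)).le
      _ ≤ 2 / r := by rw [← one_add_one_eq_two, add_div]; gcongr
  have : Nontrivial E := Module.nontrivial_of_finrank_pos (R := ℝ) (by omega)
  calc _ ≤ ∑ i ∈ Finset.range ⌈1 / r⌉₊, μ (ball (((i : ℝ) * r) • (y : E)) (2 * r)) :=
        (measure_mono (Ioo_smul_ball_subset_biUnion_ball y hr)).trans
          (measure_biUnion_finset_le _ _)
    _ = ENNReal.ofReal (⌈1 / r⌉₊ * (2 * r) ^ (Q + 1)) * μ (ball 0 1) := by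
        simp only [Measure.addHaar_ball μ _ (mul_pos two_pos hr).le, hQ, Finset.sum_const,
          Finset.card_range, nsmul_eq_mul]
        rw [ENNReal.ofReal_mul (by positivity), ENNReal.ofReal_natCast, mul_assoc]
    _ ≤ ENNReal.ofReal (2 / r * (2 * r) ^ (Q + 1)) * μ (ball 0 1) := by gcongr
    _ = ENNReal.ofReal (2 ^ (Q + 2) * r ^ Q) * μ (ball 0 1) := by
        congr 2
        field_simp
        ring

theorem isUpperRegular_toSphere (hQ : Module.finrank ℝ E = Q + 1) :
    IsUpperRegular μ.toSphere Q ((Q + 1) * 2 ^ (Q + 2) * μ.real (ball 0 1)) := by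
  intro y r hr
  have hV : μ (ball 0 1) = ENNReal.ofReal (μ.real (ball 0 1)) :=
    (ofReal_measureReal measure_ball_lt_top.ne).symm
  have hdim : (Module.finrank ℝ E : ENNReal) = ENNReal.ofReal (Q + 1) := by
    rw [hQ]; norm_cast
  suffices h : μ.toSphere (ball y r) ≤
      ENNReal.ofReal (Q + 1) * (ENNReal.ofReal (2 ^ (Q + 2) * r ^ Q) * μ (ball 0 1)) by
    refine h.trans_eq ?_
    rw [hV, ← ENNReal.ofReal_mul (by positivity), ← ENNReal.ofReal_mul (by positivity)]
    congr 1
    ring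
  rcases le_total r 1 with hr1 | hr1
  · rw [Measure.toSphere_apply' _ isOpen_ball.measurableSet, hdim]
    gcongr
    exact addHaar_Ioo_smul_ball_le μ hQ y hr hr1
  · refine (measure_mono (Set.subset_univ _)).trans ?_
    rw [Measure.toSphere_apply_univ, hdim]
    gcongr
    refine le_mul_of_one_le_left' ?_
    rw [← ENNReal.ofReal_one]
    exact ENNReal.ofReal_le_ofReal
      (one_le_mul_of_one_le_of_one_le (one_le_pow₀ one_le_two) (one_le_pow₀ hr1))

end SphereMeasure

section DualSpanning

open scoped Topology

variable {Y E ι : Type*} [TopologicalSpace Y] [NormedAddCommGroup E] [NormedSpace ℝ E]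
  [FiniteDimensional ℝ E] (V : Type*) [NormedAddCommGroup V] [NormedSpace ℝ V]

theorem exists_opNorm_le_of_span_eq_top {s : Set E} (hs : Submodule.span ℝ s = ⊤) :
    ∃ C > 0, ∃ b ⊆ s, b.Finite ∧
      ∀ (L : E →L[ℝ] V) (M : ℝ), 0 ≤ M → (∀ z ∈ b, ‖L z‖ ≤ M) → ‖L‖ ≤ C * M := by
  let B := Module.Basis.ofSpan hs.ge
  obtain ⟨C, hC, hbound⟩ := B.exists_opNorm_le (F := V)
  exact ⟨C, hC, Set.range B, Module.Basis.ofSpan_subset hs.ge, Set.finite_range B,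
    fun L M hM hL => hbound hM fun i => hL _ ⟨i, rfl⟩⟩

theorem eventually_opNorm_le_of_span_eq_top {Z : ι → Y → E} (hZ : ∀ i, Continuous (Z i)) {y₀ : Y}
    (hspan : Submodule.span ℝ (Set.range fun i => Z i y₀) = ⊤) :
    ∃ C > 0, ∀ᶠ y in 𝓝 y₀, ∀ (L : E →L[ℝ] V) (M : ℝ), 0 ≤ M → (∀ i, ‖L (Z i y)‖ ≤ M) →
      ‖L‖ ≤ C * M := by
  obtain ⟨C, hC, b, hb, hfin, hbound⟩ := exists_opNorm_le_of_span_eq_top V hspan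
  have hclose : ∀ᶠ y in 𝓝 y₀, ∀ z ∈ b, ∃ i, ‖z - Z i y‖ < (2 * C)⁻¹ := by
    refine (Filter.eventually_all_finite hfin).2 fun z hz => ?_
    obtain ⟨i, rfl⟩ := hb hz
    have hcont : Continuous fun y => ‖Z i y₀ - Z i y‖ := by fun_prop
    exact (hcont.continuousAt.eventually_lt_const (by simpa using hC)).mono fun y hy => ⟨i, hy⟩
  refine ⟨2 * C, by positivity, hclose.mono fun y hy L M hM hL => ?_⟩
  -- The error of replacing `Z i y₀` by `Z i y` is absorbed into half of `‖L‖`.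
  have habsorb : ‖L‖ ≤ C * (M + ‖L‖ * (2 * C)⁻¹) := by
    refine hbound L _ (by positivity) fun z hz => ?_
    obtain ⟨i, hi⟩ := hy z hz
    calc ‖L z‖ = ‖L (Z i y) + L (z - Z i y)‖ := by rw [← map_add, add_sub_cancel]
      _ ≤ M + ‖L‖ * (2 * C)⁻¹ :=
        (norm_add_le _ _).trans (add_le_add (hL i) (L.le_opNorm_of_le hi.le))
  have hhalf : C * (M + ‖L‖ * (2 * C)⁻¹) = C * M + ‖L‖ / 2 := by field_simp
  linarith

theorem exists_opNorm_le_of_forall_span_eq_top [CompactSpace Y] {Z : ι → Y → E}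
    (hZ : ∀ i, Continuous (Z i))
    (hspan : ∀ y, Submodule.span ℝ (Set.range fun i => Z i y) = ⊤) :
    ∃ C > 0, ∀ (y : Y) (L : E →L[ℝ] V) (M : ℝ), 0 ≤ M → (∀ i, ‖L (Z i y)‖ ≤ M) →
      ‖L‖ ≤ C * M := by
  choose C hC hbound using fun y => eventually_opNorm_le_of_span_eq_top V hZ (hspan y)
  obtain ⟨s, hs⟩ := CompactSpace.elim_nhds_subcover _ hbound
  refine ⟨∑ y ∈ s, C y + 1, add_pos_of_nonneg_of_pos (Finset.sum_nonneg fun y _ => (hC y).le)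
    one_pos, fun y L M hM hL => ?_⟩
  obtain ⟨y₀, hy₀, hy⟩ := Set.mem_iUnion₂.1 (hs.ge (Set.mem_univ y))
  have hle : C y₀ ≤ ∑ y ∈ s, C y + 1 :=
    (Finset.single_le_sum (fun y _ => (hC y).le) hy₀).trans (le_add_of_nonneg_right zero_le_one)
  exact (hy L M hM hL).trans (mul_le_mul_of_nonneg_right hle hM)

end DualSpanning

section GreatCircles

open InnerProductGeometry

variable {E : Type*} [NormedAddCommGroup E] [InnerProductSpace ℝ E]

theorem dist_eq_two_mul_sin_angle_div_two (x y : sphere (0 : E) 1) :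
    dist x y = 2 * Real.sin (angle (x : E) y / 2) := by
  have hsin : 0 ≤ Real.sin (angle (x : E) y / 2) :=
    Real.sin_nonneg_of_nonneg_of_le_pi (by linarith [angle_nonneg (x : E) y])
      (by linarith [angle_le_pi (x : E) y, angle_nonneg (x : E) y])
  rw [← sq_eq_sq₀ dist_nonneg (by positivity), Subtype.dist_eq, dist_eq_norm, norm_sub_sq_real,
    ← cos_angle_mul_norm_mul_norm, norm_eq_of_mem_sphere, norm_eq_of_mem_sphere, mul_pow,
    Real.sin_sq_eq_half_sub, mul_div_cancel₀ _ two_ne_zero]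
  ring

theorem dist_le_angle (x y : sphere (0 : E) 1) : dist x y ≤ angle (x : E) y := by
  have := Real.sin_le (div_nonneg (angle_nonneg (x : E) y) zero_le_two)
  rw [dist_eq_two_mul_sin_angle_div_two]
  linarith

theorem angle_le_pi_div_two_mul_dist (x y : sphere (0 : E) 1) :
    angle (x : E) y ≤ Real.pi / 2 * dist x y := by
  have := Real.mul_le_sin (div_nonneg (angle_nonneg (x : E) y) zero_le_two)
    (div_le_div_of_nonneg_right (angle_le_pi _ _) zero_le_two)
  rw [dist_eq_two_mul_sin_angle_div_two]
  calc angle (x : E) y = Real.pi * (2 / Real.pi * (angle (x : E) y / 2)) := by field_simp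
    _ ≤ Real.pi * Real.sin (angle (x : E) y / 2) := by gcongr
    _ = _ := by ring

theorem exists_norm_eq_one_norm_smul_eq [Nontrivial E] (w : E) :
    ∃ u : E, ‖u‖ = 1 ∧ ‖w‖ • u = w := by
  rcases eq_or_ne w 0 with rfl | hw
  · obtain ⟨u, hu⟩ := exists_norm_eq E zero_le_one
    exact ⟨u, hu, by simp⟩
  · exact ⟨‖w‖⁻¹ • w, norm_smul_inv_norm hw, smul_inv_smul₀ (norm_ne_zero_iff.2 hw) w⟩

theorem exists_eq_cos_smul_add_sin_smul (hE : 1 < Module.finrank ℝ E) (x y : sphere (0 : E) 1) :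
    ∃ v : E, ‖v‖ = 1 ∧ ⟪(x : E), v⟫ = 0 ∧
      Real.cos (angle (x : E) y) • (x : E) + Real.sin (angle (x : E) y) • v = y := by
  set θ := angle (x : E) y
  have : FiniteDimensional ℝ E := .of_finrank_pos (by lia)
  have : Nontrivial (Submodule.span ℝ {(x : E)})ᗮ := by
    have hspan := finrank_span_singleton (K := ℝ) (ne_zero_of_mem_unit_sphere x)
    have hadd := (Submodule.span ℝ {(x : E)}).finrank_add_finrank_orthogonal
    exact Module.nontrivial_of_finrank_pos (R := ℝ) (by lia)
  have hcos : ⟪(x : E), (y : E)⟫ = Real.cos θ := by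
    rw [← cos_angle_mul_norm_mul_norm, norm_eq_of_mem_sphere, norm_eq_of_mem_sphere, mul_one,
      mul_one]
  have hw : (y : E) - Real.cos θ • (x : E) ∈ (Submodule.span ℝ {(x : E)})ᗮ := by
    rw [Submodule.mem_orthogonal_singleton_iff_inner_right, inner_sub_right, inner_smul_right,
      real_inner_self_eq_norm_sq, norm_eq_of_mem_sphere, hcos]
    ring
  have hnorm : ‖(y : E) - Real.cos θ • (x : E)‖ = Real.sin θ := by
    rw [← sq_eq_sq₀ (norm_nonneg _) (sin_angle_nonneg _ _), norm_sub_sq_real, inner_smul_right,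
      real_inner_comm, hcos, norm_smul, norm_eq_of_mem_sphere, norm_eq_of_mem_sphere, Real.sin_sq,
      Real.norm_eq_abs, mul_one, sq_abs]
    ring
  obtain ⟨v, hv, hwv⟩ := exists_norm_eq_one_norm_smul_eq (⟨_, hw⟩ : (Submodule.span ℝ {(x : E)})ᗮ)
  refine ⟨v, hv, Submodule.mem_orthogonal_singleton_iff_inner_right.1 v.2, ?_⟩
  have hwv' := congrArg Subtype.val hwv
  rw [Submodule.coe_norm, hnorm] at hwv'
  exact (congrArg _ hwv').trans (add_sub_cancel _ _)

theorem norm_cos_smul_add_sin_smul {x v : E} (hx : ‖x‖ = 1) (hv : ‖v‖ = 1) (hxv : ⟪x, v⟫ = 0)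
    (τ : ℝ) : ‖Real.cos τ • x + Real.sin τ • v‖ = 1 := by
  rw [← sq_eq_sq₀ (norm_nonneg _) zero_le_one, norm_add_sq_real, norm_smul, norm_smul,
    inner_smul_left, inner_smul_right, hxv, hx, hv]
  simp

end GreatCircles

section SphereCalculus

open InnerProductGeometry

variable {E V : Type*} [NormedAddCommGroup E] [InnerProductSpace ℝ E] [NormedAddCommGroup V]
  [NormedSpace ℝ V] {n : ℕ} [Fact (Module.finrank ℝ E = n + 1)]

theorem hasDerivAt_comp_curve {f : sphere (0 : E) 1 → V} {γ : ℝ → sphere (0 : E) 1} {τ : ℝ}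
    (hf : MDifferentiableAt (𝓡 n) 𝓘(ℝ, V) f (γ τ)) (hγ : MDifferentiableAt 𝓘(ℝ, ℝ) (𝓡 n) γ τ) :
    HasDerivAt (fun s => f (γ s))
      (mvfderiv (𝓡 n) f (γ τ) (mfderiv 𝓘(ℝ, ℝ) (𝓡 n) γ τ (1 : ℝ))) τ := by
  have hchain : HasFDerivAt (fun s => f (γ s))
      ((mvfderiv (𝓡 n) f (γ τ)).comp (mfderiv 𝓘(ℝ, ℝ) (𝓡 n) γ τ) : ℝ →L[ℝ] V) τ :=
    (hf.hasMFDerivAt.comp τ hγ.hasMFDerivAt).hasFDerivAt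
  exact hchain.hasDerivAt

/-- The unit-speed great circle through the unit vector `x` in the direction of the unit vector
`v ⟂ x`. -/
def greatCircle {x v : E} (hx : ‖x‖ = 1) (hv : ‖v‖ = 1) (hxv : ⟪x, v⟫ = 0) :
    ℝ → sphere (0 : E) 1 :=
  Set.codRestrict (fun τ => Real.cos τ • x + Real.sin τ • v) _ fun τ =>
    mem_sphere_zero_iff_norm.2 (norm_cos_smul_add_sin_smul hx hv hxv τ)

theorem mdifferentiable_greatCircle {x v : E} (hx : ‖x‖ = 1) (hv : ‖v‖ = 1) (hxv : ⟪x, v⟫ = 0) :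
    MDifferentiable 𝓘(ℝ, ℝ) (𝓡 n) (greatCircle hx hv hxv) := by
  have hsmooth : ContDiff ℝ 1 fun τ => Real.cos τ • x + Real.sin τ • v :=
    (Real.contDiff_cos.smul contDiff_const).add (Real.contDiff_sin.smul contDiff_const)
  exact (hsmooth.contMDiff.codRestrict_sphere _).mdifferentiable one_ne_zero

theorem norm_velocity_greatCircle {x v : E} (hx : ‖x‖ = 1) (hv : ‖v‖ = 1) (hxv : ⟪x, v⟫ = 0)
    (τ : ℝ) :
    ‖mvfderiv (𝓡 n) ((↑) : sphere (0 : E) 1 → E) (greatCircle hx hv hxv τ)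
      (mfderiv 𝓘(ℝ, ℝ) (𝓡 n) (greatCircle hx hv hxv) τ (1 : ℝ))‖ = 1 := by
  have hvelocity := hasDerivAt_comp_curve (n := n)
    (contMDiff_coe_sphere.mdifferentiableAt one_ne_zero)
    (mdifferentiable_greatCircle hx hv hxv τ)
  have hexplicit : HasDerivAt (fun s => (greatCircle hx hv hxv s : E))
      (Real.cos τ • v + Real.sin τ • -x) τ :=
    (((Real.hasDerivAt_cos τ).smul_const x).add
      ((Real.hasDerivAt_sin τ).smul_const v)).congr_deriv (by module)
  rw [hvelocity.unique hexplicit]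
  exact norm_cos_smul_add_sin_smul hv (by rwa [norm_neg])
    (by rw [inner_neg_right, real_inner_comm, hxv, neg_zero]) τ

theorem norm_sub_le_of_norm_mvfderiv_le [NeZero n] {f : sphere (0 : E) 1 → V}
    (hf : MDifferentiable (𝓡 n) 𝓘(ℝ, V) f) {B : ℝ}
    (hB : ∀ z (v : TangentSpace (𝓡 n) z), ‖mvfderiv (𝓡 n) f z v‖ ≤
      B * ‖mvfderiv (𝓡 n) ((↑) : sphere (0 : E) 1 → E) z v‖) (x y : sphere (0 : E) 1) :
    ‖f y - f x‖ ≤ B * angle (x : E) y := by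
  have hfinrank : Module.finrank ℝ E = n + 1 := Fact.out
  have hn := NeZero.ne n
  obtain ⟨v, hv, hxv, hy⟩ := exists_eq_cos_smul_add_sin_smul (by lia) x y
  have hx := norm_eq_of_mem_sphere x
  have hstart : greatCircle hx hv hxv 0 = x := Subtype.ext (by simp [greatCircle])
  have hend : greatCircle hx hv hxv (angle (x : E) y) = y := Subtype.ext hy
  have hmv := norm_image_sub_le_of_norm_deriv_le_segment' (C := B)
    (fun τ _ => (hasDerivAt_comp_curve (hf _)
      (mdifferentiable_greatCircle (n := n) hx hv hxv τ)).hasDerivWithinAt)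
    (fun τ _ => (hB _ _).trans_eq (by rw [norm_velocity_greatCircle, mul_one]))
    _ (Set.right_mem_Icc.2 (angle_nonneg (x : E) y))
  rwa [hstart, hend, sub_zero] at hmv

theorem continuous_mvfderiv_apply {f : sphere (0 : E) 1 → V} (hf : ContMDiff (𝓡 n) 𝓘(ℝ, V) 1 f)
    {X : (x : sphere (0 : E) 1) → TangentSpace (𝓡 n) x}
    (hX : Continuous fun x => (⟨x, X x⟩ : TangentBundle (𝓡 n) (sphere (0 : E) 1))) :
    Continuous fun y => mvfderiv (𝓡 n) f y (X y) :=
  continuous_snd.comp ((tangentBundleModelSpaceHomeomorph 𝓘(ℝ, V)).continuous.comp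
    ((hf.continuous_tangentMap le_rfl).comp hX))

theorem exists_continuousLinearMap_comp_mvfderiv_subtypeVal (z : sphere (0 : E) 1)
    (L : TangentSpace (𝓡 n) z →L[ℝ] V) :
    ∃ L' : E →L[ℝ] V, L' z = 0 ∧
      ∀ v, L' (mvfderiv (𝓡 n) ((↑) : sphere (0 : E) 1 → E) z v) = L v := by
  have : FiniteDimensional ℝ E := .of_fact_finrank_eq_succ n
  let D := mvfderiv (𝓡 n) ((↑) : sphere (0 : E) 1 → E) z
  obtain ⟨g, hg⟩ := D.toLinearMap.exists_leftInverse_of_injective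
    (LinearMap.ker_eq_bot.2 (injective_mvfderiv_subtypeVal_sphere z))
  refine ⟨(LinearMap.toContinuousLinearMap (L.toLinearMap ∘ₗ g)) ∘L
    (Submodule.span ℝ {(z : E)})ᗮ.starProjection, ?_, fun v => ?_⟩
  · rw [ContinuousLinearMap.comp_apply, Submodule.starProjection_orthogonal_apply_eq_zero
      (Submodule.mem_span_singleton_self _), map_zero]
  · have hmem : D v ∈ (Submodule.span ℝ {(z : E)})ᗮ :=
      range_mvfderiv_subtypeVal (n := n) z ▸ ⟨v, rfl⟩
    rw [ContinuousLinearMap.comp_apply, Submodule.starProjection_eq_self_iff.2 hmem]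
    exact congrArg L (LinearMap.congr_fun hg v)

theorem span_insert_image_mvfderiv_subtypeVal_eq_top (z : sphere (0 : E) 1)
    {s : Set (TangentSpace (𝓡 n) z)} (hs : Submodule.span ℝ s = ⊤) :
    Submodule.span ℝ (insert (z : E) (mvfderiv (𝓡 n) ((↑) : sphere (0 : E) 1 → E) z '' s)) = ⊤ := by
  have : FiniteDimensional ℝ E := .of_fact_finrank_eq_succ n
  have hrange := range_mvfderiv_subtypeVal (n := n) z
  rw [Submodule.span_insert, ← ContinuousLinearMap.coe_coe, Submodule.span_image, hs,
    Submodule.map_top]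
  exact hrange ▸ Submodule.sup_orthogonal_of_hasOrthogonalProjection

variable {ι : Type*} {X : ι → (x : sphere (0 : E) 1) → TangentSpace (𝓡 n) x}

variable (V) in
theorem exists_norm_apply_le_of_spanning_fields
    (hX : ∀ i, Continuous fun x => (⟨x, X i x⟩ : TangentBundle (𝓡 n) (sphere (0 : E) 1)))
    (hspan : ∀ x, Submodule.span ℝ (Set.range fun i => X i x) = ⊤) :
    ∃ C > 0, ∀ z (L : TangentSpace (𝓡 n) z →L[ℝ] V) (M : ℝ), 0 ≤ M → (∀ i, ‖L (X i z)‖ ≤ M) →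
      ∀ v, ‖L v‖ ≤ C * M * ‖mvfderiv (𝓡 n) ((↑) : sphere (0 : E) 1 → E) z v‖ := by
  have : FiniteDimensional ℝ E := .of_fact_finrank_eq_succ n
  -- Adding the radial field makes the images of the `X i` span the ambient space.
  let Z : Option ι → sphere (0 : E) 1 → E := fun o z =>
    o.elim (z : E) fun i => mvfderiv (𝓡 n) ((↑) : sphere (0 : E) 1 → E) z (X i z)
  have hZ : ∀ o, Continuous (Z o) := by
    rintro (_ | i)
    · exact continuous_subtype_val
    · exact continuous_mvfderiv_apply contMDiff_coe_sphere (hX i)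
  have hZspan : ∀ z, Submodule.span ℝ (Set.range fun o => Z o z) = ⊤ := by
    intro z
    rw [Option.range_eq]
    have := span_insert_image_mvfderiv_subtypeVal_eq_top z (hspan z)
    rwa [← Set.range_comp] at this
  obtain ⟨C, hC, hbound⟩ := exists_opNorm_le_of_forall_span_eq_top V hZ hZspan
  refine ⟨C, hC, fun z L M hM hL v => ?_⟩
  obtain ⟨L', hL'z, hL'⟩ := exists_continuousLinearMap_comp_mvfderiv_subtypeVal z L
  have hle : ‖L'‖ ≤ C * M := by
    refine hbound z L' M hM ?_
    rintro (_ | i)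
    · simpa [Z, hL'z] using hM
    · simpa [Z, hL'] using hL i
  exact hL' v ▸ L'.le_of_opNorm_le hle _

variable (V) in
theorem exists_norm_sub_le_of_norm_mvfderiv_apply_le [NeZero n]
    (hX : ∀ i, Continuous fun x => (⟨x, X i x⟩ : TangentBundle (𝓡 n) (sphere (0 : E) 1)))
    (hspan : ∀ x, Submodule.span ℝ (Set.range fun i => X i x) = ⊤) :
    ∃ C > 0, ∀ f : sphere (0 : E) 1 → V, MDifferentiable (𝓡 n) 𝓘(ℝ, V) f →
      ∀ M, 0 ≤ M → (∀ z i, ‖mvfderiv (𝓡 n) f z (X i z)‖ ≤ M) →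
        ∀ x y, ‖f y - f x‖ ≤ C * M * dist x y := by
  obtain ⟨C, hC, hbound⟩ := exists_norm_apply_le_of_spanning_fields V hX hspan
  refine ⟨C * (Real.pi / 2), by positivity, fun f hf M hM hfM x y => ?_⟩
  calc ‖f y - f x‖ ≤ C * M * angle (x : E) y :=
        norm_sub_le_of_norm_mvfderiv_le hf (fun z v => hbound z _ M hM (hfM z) v) x y
    _ ≤ C * M * (Real.pi / 2 * dist x y) := by
        gcongr
        exact angle_le_pi_div_two_mul_dist x y
    _ = C * (Real.pi / 2) * M * dist x y := by ring

theorem exists_lipschitzWith_of_contMDiff [NeZero n] [Finite ι]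
    (hX : ∀ i, Continuous fun x => (⟨x, X i x⟩ : TangentBundle (𝓡 n) (sphere (0 : E) 1)))
    (hspan : ∀ x, Submodule.span ℝ (Set.range fun i => X i x) = ⊤)
    {f : sphere (0 : E) 1 → V} (hf : ContMDiff (𝓡 n) 𝓘(ℝ, V) 1 f) :
    ∃ L, LipschitzWith L f := by
  have : FiniteDimensional ℝ E := .of_fact_finrank_eq_succ n
  have := Fintype.ofFinite ι
  choose M hM using fun i => isCompact_univ.exists_bound_of_continuousOn
    (continuous_mvfderiv_apply hf (hX i)).continuousOn
  obtain ⟨C, _, hbound⟩ := exists_norm_sub_le_of_norm_mvfderiv_apply_le V hX hspan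
  have hfM : ∀ z i, ‖mvfderiv (𝓡 n) f z (X i z)‖ ≤ ∑ i, |M i| := fun z i =>
    ((hM i z trivial).trans (le_abs_self _)).trans
      (Finset.single_le_sum (fun i _ => abs_nonneg (M i)) (Finset.mem_univ i))
  refine ⟨_, LipschitzWith.of_dist_le' (K := C * ∑ i, |M i|) fun x y => ?_⟩
  rw [dist_comm, dist_eq_norm]
  exact hbound f (hf.mdifferentiable one_ne_zero) _ (by positivity) hfM x y

theorem mdifferentiable_clm_comp {W : Type*} [NormedAddCommGroup W] [NormedSpace ℝ W]
    (ℓ : V →L[ℝ] W) {f : sphere (0 : E) 1 → V} (hf : MDifferentiable (𝓡 n) 𝓘(ℝ, V) f) :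
    MDifferentiable (𝓡 n) 𝓘(ℝ, W) (ℓ ∘ f) := fun z =>
  (ℓ.hasMFDerivAt.comp z (hf z).hasMFDerivAt).mdifferentiableAt

theorem mvfderiv_clm_comp_apply {W : Type*} [NormedAddCommGroup W] [NormedSpace ℝ W]
    (ℓ : V →L[ℝ] W) {f : sphere (0 : E) 1 → V} {z : sphere (0 : E) 1}
    (hf : MDifferentiableAt (𝓡 n) 𝓘(ℝ, V) f z) (v : TangentSpace (𝓡 n) z) :
    mvfderiv (𝓡 n) (ℓ ∘ f) z v = ℓ (mvfderiv (𝓡 n) f z v) :=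
  DFunLike.congr_fun (ℓ.hasMFDerivAt.comp z hf.hasMFDerivAt).mfderiv v

theorem mdifferentiable_finset_sum {κ : Type*} {f : κ → sphere (0 : E) 1 → V} (s : Finset κ)
    (hf : ∀ k, MDifferentiable (𝓡 n) 𝓘(ℝ, V) (f k)) :
    MDifferentiable (𝓡 n) 𝓘(ℝ, V) (∑ k ∈ s, f k) :=
  Finset.sum_induction f _ (fun _ _ => MDifferentiable.add) mdifferentiable_const fun k _ => hf k

theorem mvfderiv_finset_sum_apply {κ : Type*} {f : κ → sphere (0 : E) 1 → V} (s : Finset κ)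
    (hf : ∀ k, MDifferentiable (𝓡 n) 𝓘(ℝ, V) (f k)) (z : sphere (0 : E) 1)
    (v : TangentSpace (𝓡 n) z) :
    mvfderiv (𝓡 n) (∑ k ∈ s, f k) z v = ∑ k ∈ s, mvfderiv (𝓡 n) (f k) z v := by
  classical
  induction s using Finset.induction_on with
  | empty => simp
  | insert k s hk ih =>
    rw [Finset.sum_insert hk, Finset.sum_insert hk,
      mvfderiv_add (hf k z) (mdifferentiable_finset_sum s hf z), add_apply, ih]

theorem exists_sum_norm_sub_le_of_sum_norm_mvfderiv_apply_le [NeZero n]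
    (hX : ∀ i, Continuous fun x => (⟨x, X i x⟩ : TangentBundle (𝓡 n) (sphere (0 : E) 1)))
    (hspan : ∀ x, Submodule.span ℝ (Set.range fun i => X i x) = ⊤) :
    ∃ C > 0, ∀ {κ : Type*} [Fintype κ] {m : κ → ℝ} {f : κ → sphere (0 : E) 1 → V},
      (∀ k, 0 ≤ m k) → (∀ k, MDifferentiable (𝓡 n) 𝓘(ℝ, V) (f k)) →
      ∀ M, 0 ≤ M → (∀ z i, ∑ k, m k * ‖mvfderiv (𝓡 n) (f k) z (X i z)‖ ≤ M) →
        ∀ x y, ∑ k, m k * ‖f k y - f k x‖ ≤ C * M * dist x y := by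
  obtain ⟨C, hC, hbound⟩ := exists_norm_sub_le_of_norm_mvfderiv_apply_le ℝ hX hspan
  refine ⟨C, hC, fun {κ} _ {m f} hm hf M hM hfM x y => ?_⟩
  -- By duality the weighted sum of increments is the increment of one real function.
  choose ℓ hℓ hℓ_apply using fun k => exists_dual_vector'' ℝ (f k y - f k x)
  have hcomp : ∀ k, MDifferentiable (𝓡 n) 𝓘(ℝ, ℝ) ((m k • ℓ k) ∘ f k) := fun k =>
    mdifferentiable_clm_comp (m k • ℓ k) (hf k)
  have hgM : ∀ z i, ‖mvfderiv (𝓡 n) (∑ k, (m k • ℓ k) ∘ f k) z (X i z)‖ ≤ M := by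
    intro z i
    rw [mvfderiv_finset_sum_apply _ hcomp]
    refine (norm_sum_le _ _).trans ((Finset.sum_le_sum fun k _ => ?_).trans (hfM z i))
    rw [mvfderiv_clm_comp_apply _ (hf k z), smul_apply, norm_smul, Real.norm_of_nonneg (hm k)]
    gcongr
    · exact hm k
    · exact ((ℓ k).le_of_opNorm_le (hℓ k) _).trans_eq (one_mul _)
  calc ∑ k, m k * ‖f k y - f k x‖
      = (∑ k, (m k • ℓ k) ∘ f k) y - (∑ k, (m k • ℓ k) ∘ f k) x := by
        simp [← Finset.sum_sub_distrib, ← mul_sub, ← map_sub, hℓ_apply]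
    _ ≤ C * M * dist x y :=
        (le_abs_self _).trans (hbound _ (mdifferentiable_finset_sum _ hcomp) M hM hgM x y)

end SphereCalculus

section SphereMolecules

instance : IsFiniteMeasure sphMeasure := by
  unfold sphMeasure
  infer_instance

instance : NeZero sphMeasure := ⟨Measure.toSphere_ne_zero _⟩

theorem isUpperRegular_sphMeasure : ∃ C ≥ 0, IsUpperRegular sphMeasure 2 C :=
  ⟨_, by positivity, isUpperRegular_toSphere _ (Q := 2) (by simp)⟩

theorem dist_le_gdist (x y : Sph) : dist x y ≤ gdist x y := by
  have h := dist_le_angle x y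
  rwa [InnerProductGeometry.angle, norm_eq_of_mem_sphere, norm_eq_of_mem_sphere, mul_one,
    div_one] at h

theorem isTaggedPartition_of_gdist_lt {κ : Type*} {E : κ → Set Sph} {x : κ → Sph} {t : ℝ}
    (hE : ∀ k, MeasurableSet (E k)) (hdisj : Pairwise fun k l => Disjoint (E k) (E l))
    (hcover : ⋃ k, E k = Set.univ) (hdiam : ∀ k, ∀ y ∈ E k, ∀ z ∈ E k, gdist y z < t)
    (hx : ∀ k, x k ∈ E k) : IsTaggedPartition E x t :=
  ⟨hE, hdisj, hcover, fun k y hy => (dist_le_gdist y (x k)).trans_lt (hdiam k y hy _ (hx k))⟩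

theorem mul_one_add_pow_le {A b u : ℝ} {n : ℕ} (hA : 0 ≤ A * b) (hu : 0 ≤ u)
    (h : ∀ N ≤ n, A * (u ^ N * b) ≤ 1) : A * (b * (1 + u) ^ n) ≤ 2 ^ n := by
  rcases le_total u 1 with hu1 | hu1
  · calc A * (b * (1 + u) ^ n) = A * (u ^ 0 * b) * (1 + u) ^ n := by ring
      _ ≤ 1 * 2 ^ n := by
        gcongr
        · exact h 0 n.zero_le
        · linarith
      _ = 2 ^ n := one_mul _
  · calc A * (b * (1 + u) ^ n) = A * b * (1 + u) ^ n := by ring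
      _ ≤ A * b * (2 * u) ^ n := by
        gcongr
        linarith
      _ = A * (u ^ n * b) * 2 ^ n := by ring
      _ ≤ 1 * 2 ^ n := by
        gcongr
        exact h n le_rfl
      _ = 2 ^ n := one_mul _

theorem mul_one_add_dist_div_pow_le {A b t : ℝ} {n : ℕ} {x y : Sph} (hA : 0 ≤ A) (hb : 0 ≤ b)
    (ht : 0 < t) (h : ∀ N ≤ n, A * ((gdist x y / t) ^ N * b) ≤ 1) :
    A * (b * (1 + dist y x / t) ^ n) ≤ 2 ^ n := by
  refine mul_one_add_pow_le (mul_nonneg hA hb) (by positivity) fun N hN => le_trans ?_ (h N hN)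
  gcongr
  exact (dist_comm y x).trans_le (dist_le_gdist x y)

variable {ι : Type*} {X : ι → (x : Sph) → TangentSpace (𝓡 2) x} {t : ℝ}

theorem mul_norm_le_of_mem_MClass {φ : Sph → ℂ} {x : Sph} (ht : 0 < t) (hφ : φ ∈ MClass X x t)
    (y : Sph) : t ^ 2 * (‖φ y‖ * (1 + dist y x / t) ^ 4) ≤ 2 ^ 4 :=
  mul_one_add_dist_div_pow_le (by positivity) (norm_nonneg _) ht (hφ.2.2.1 y)

theorem mul_norm_mvfderiv_le_of_mem_MClass {φ : Sph → ℂ} {x : Sph} (ht : 0 < t)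
    (hφ : φ ∈ MClass X x t) (i : ι) (y : Sph) :
    t ^ 2 * (t * ‖mvfderiv (𝓡 2) φ y (X i y)‖ * (1 + dist y x / t) ^ 4) ≤ 2 ^ 4 := by
  rw [mul_assoc t, ← mul_assoc, ← pow_succ]
  exact mul_one_add_dist_div_pow_le (by positivity) (norm_nonneg _) ht (hφ.2.2.2 i y)

theorem exists_isScaleFamily_of_mem_MClass
    (hX : ∀ i, Continuous fun x => (⟨x, X i x⟩ : TangentBundle (𝓡 2) Sph))
    (hspan : ∀ x, Submodule.span ℝ (Set.range fun i => X i x) = ⊤) :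
    ∃ K ≥ 0, ∀ {κ : Type*} [Fintype κ] {E : κ → Set Sph} {x : κ → Sph} {t : ℝ} {φ : κ → C(Sph, ℂ)},
      0 < t → IsTaggedPartition E x t → (∀ k, ⇑(φ k) ∈ MClass X (x k) t) →
        IsScaleFamily sphMeasure K t (fun k => sphMeasure.real (E k)) x φ := by
  obtain ⟨c, hc, hreg⟩ := isUpperRegular_sphMeasure
  obtain ⟨C, _, hosc⟩ := exists_sum_norm_sub_le_of_sum_norm_mvfderiv_apply_le (V := ℂ) hX hspan
  set B : ℝ := 2 ^ 4 * (4 ^ (2 + 1) * c)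
  have hB0 : 0 ≤ B := by positivity
  refine ⟨max B (C * B), le_max_of_le_left hB0, fun {κ} _ {E x t φ} ht hE hφ =>
    hreg.isScaleFamily hc hE ht (by positivity) (le_max_left _ _) (fun k => (hφ k).2.1)
      (fun k => mul_norm_le_of_mem_MClass ht (hφ k)) fun y z => ?_⟩
  have hderiv : ∀ w i, ∑ k, sphMeasure.real (E k) * ‖mvfderiv (𝓡 2) (φ k) w (X i w)‖ ≤ B / t := by
    intro w i
    rw [le_div_iff₀' ht, Finset.mul_sum]
    simp only [mul_left_comm t]
    exact hreg.sum_measureReal_mul_le hc hE ht (fun k => by positivity)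
      (fun k => mul_norm_mvfderiv_le_of_mem_MClass ht (hφ k) i w) (by positivity)
  calc ∑ k, sphMeasure.real (E k) * ‖φ k y - φ k z‖ ≤ C * (B / t) * dist z y :=
        hosc (fun k => measureReal_nonneg)
          (fun k => (hφ k).1.mdifferentiable (by simp)) _ (by positivity) hderiv z y
    _ = C * B / t * dist y z := by rw [dist_comm]; ring
    _ ≤ max B (C * B) / t * dist y z := by
        gcongr
        exact le_max_right _ _

end SphereMolecules

section SummationOperator

theorem eLpNorm_le_of_opNorm_le {α 𝕜 : Type*} [MeasurableSpace α] {μ : Measure α} [RCLike 𝕜]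
    {S : Lp 𝕜 2 μ →L[𝕜] Lp 𝕜 2 μ} {C : ℝ} (hS : ‖S‖ ≤ C) {F g : α → 𝕜} (hF : MemLp F 2 μ)
    (hg : S (hF.toLp F) =ᵐ[μ] g) :
    eLpNorm g 2 μ ≤ ENNReal.ofReal C * eLpNorm F 2 μ := by
  rw [← eLpNorm_congr_ae hg, ← eLpNorm_congr_ae hF.coeFn_toLp, ← Lp.enorm_def, ← Lp.enorm_def,
    ← ofReal_norm, ← ofReal_norm, ← ENNReal.ofReal_mul ((norm_nonneg S).trans hS)]
  exact ENNReal.ofReal_le_ofReal (S.le_of_opNorm_le hS _)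

theorem statement_14_general
    {ι : Type*} (X : ι → (x : Sph) → TangentSpace (𝓡 2) x)
    (hX : ∀ i, Continuous fun x => (⟨x, X i x⟩ : TangentBundle (𝓡 2) Sph))
    (hXspan : ∀ x : Sph, Submodule.span ℝ (Set.range fun i => X i x) = ⊤)
    (a : ℝ) (ha : 1 < a) :
    ∃ C₂ : ℝ, 0 < C₂ ∧
      ∀ (N : ℤ → ℕ) (E : (j : ℤ) → Fin (N j) → Set Sph),
        (∀ j k, MeasurableSet (E j k)) →
        (∀ j, Pairwise fun k k' => Disjoint (E j k) (E j k')) →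
        (∀ j, (⋃ k, E j k) = Set.univ) →
        (∀ j k, ∀ y ∈ E j k, ∀ z ∈ E j k, gdist y z < a ^ j) →
        ∀ (xp : (j : ℤ) → Fin (N j) → Sph), (∀ j k, xp j k ∈ E j k) →
        ∀ (φ ψ : (j : ℤ) → Fin (N j) → (Sph → ℂ)),
          (∀ j k, φ j k ∈ MClass X (xp j k) (a ^ j)) →
          (∀ j k, ψ j k ∈ MClass X (xp j k) (a ^ j)) →
        ∀ F : Sph → ℂ, (∃ L, LipschitzWith L F) →
          ((∀ x : Sph, Summable fun p : (j : ℤ) × Fin (N j) =>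
              ‖(sphMeasure (E p.1 p.2)).toReal * sphInner F (φ p.1 p.2) *
                ψ p.1 p.2 x‖) ∧
            TendstoUniformly
              (fun (s : Finset ((j : ℤ) × Fin (N j))) (x : Sph) =>
                ∑ p ∈ s, ‖(sphMeasure (E p.1 p.2)).toReal * sphInner F (φ p.1 p.2) *
                  ψ p.1 p.2 x‖)
              (fun x : Sph => ∑' p : (j : ℤ) × Fin (N j),
                ‖(sphMeasure (E p.1 p.2)).toReal * sphInner F (φ p.1 p.2) *
                  ψ p.1 p.2 x‖)
              Filter.atTop) ∧
          (eLpNorm (fun x : Sph => ∑' p : (j : ℤ) × Fin (N j),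
              (sphMeasure (E p.1 p.2)).toReal * sphInner F (φ p.1 p.2) * ψ p.1 p.2 x)
              2 sphMeasure ≤
            ENNReal.ofReal C₂ * eLpNorm F 2 sphMeasure) ∧
          (∃ Sbar : Lp ℂ 2 sphMeasure →L[ℂ] Lp ℂ 2 sphMeasure,
            ‖Sbar‖ ≤ C₂ ∧
            ∀ G : Sph → ℂ, (∃ L, LipschitzWith L G) →
              ∀ hm : MemLp G 2 sphMeasure,
                (Sbar (hm.toLp G) : Sph → ℂ) =ᵐ[sphMeasure]
                  fun x : Sph => ∑' p : (j : ℤ) × Fin (N j),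
                    (sphMeasure (E p.1 p.2)).toReal * sphInner G (φ p.1 p.2) *
                      ψ p.1 p.2 x) := by
  obtain ⟨K, hK, hfam⟩ := exists_isScaleFamily_of_mem_MClass hX hXspan
  have hle : scaleBesselBound K a ≤ scaleBesselBound K a + 1 := le_add_of_nonneg_right zero_le_one
  refine ⟨scaleBesselBound K a + 1, add_pos_of_nonneg_of_pos (scaleBesselBound_nonneg K a) one_pos,
    fun N E hE hdisj hcover hdiam xp hxp φ ψ hφ hψ F ⟨L, hF⟩ => ?_⟩
  have hm : ∀ j k, 0 ≤ sphMeasure.real (E j k) := fun _ _ => measureReal_nonneg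
  have hscale : ∀ θ : (j : ℤ) → Fin (N j) → C(Sph, ℂ),
      (∀ j k, ⇑(θ j k) ∈ MClass X (xp j k) (a ^ j)) → ∀ j, IsScaleFamily sphMeasure K (a ^ j)
        (fun k => sphMeasure.real (E j k)) (xp j) (θ j) := fun θ hθ j =>
    hfam (zpow_pos (one_pos.trans ha) j)
      (isTaggedPartition_of_gdist_lt (hE j) (hdisj j) (hcover j) (hdiam j) (hxp j)) (hθ j)
  have hφs := hscale (fun j k => ⟨φ j k, (hφ j k).1.continuous⟩) hφ
  have hψs := hscale (fun j k => ⟨ψ j k, (hψ j k).1.continuous⟩) hψ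
  obtain ⟨S, hS, hSF⟩ := exists_scale_operator hm hK ha hφs hψs
  refine ⟨⟨summable_norm_scaleTerm hm hK ha hφs hψs (F := ⟨F, hF.continuous⟩) hF,
    tendstoUniformly_sum_norm_scaleTerm hm hK ha hφs hψs (F := ⟨F, hF.continuous⟩) hF⟩, ?_,
    S, hS.trans hle, fun G ⟨M, hG⟩ _ => hSF ⟨G, hG.continuous⟩ M hG⟩
  exact eLpNorm_le_of_opNorm_le (hS.trans hle)
    (ContinuousMap.memLp sphMeasure ℂ ⟨F, hF.continuous⟩) (hSF ⟨F, hF.continuous⟩ L hF)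

end SummationOperator

/-- **The summation operator theorem on `S²` (parts (a) and (b)).**
Fix a finite family `𝒫 = {X i}` of smooth vector fields on `S²` spanning the tangent
space at each point, and `a > 1`.  There is `C₂ > 0` such that: for any partitions
`{E_{j,k}}` of `S²` (for `j ∈ ℤ`) into finitely many measurable pieces of geodesic
diameter `< a^j`, points `x_{j,k} ∈ E_{j,k}` and `φ_{j,k}, ψ_{j,k} ∈ ℳ_{x_{j,k},a^j}`,
for every `F ∈ C¹(S²)`: (a) the series `SF = ∑_{j,k} μ(E_{j,k})⟨F,φ_{j,k}⟩ψ_{j,k}`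
converges absolutely, uniformly on `S²`, and (b) `‖SF‖₂ ≤ C₂‖F‖₂`; consequently `S`
extends to a bounded operator on `L²(S²)` of norm at most `C₂`. -/
theorem statement_14
    (ι : Type*) [Fintype ι] (X : ι → (x : Sph) → TangentSpace (𝓡 2) x)
    (hXsmooth : ∀ i, ContMDiff (𝓡 2) (𝓡 2).tangent (⊤ : ℕ∞)
      (fun x => (⟨x, X i x⟩ : TangentBundle (𝓡 2) Sph)))
    (hXspan : ∀ x : Sph, Submodule.span ℝ (Set.range fun i => X i x) = ⊤)
    (a : ℝ) (ha : 1 < a) :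
    ∃ C₂ : ℝ, 0 < C₂ ∧
      ∀ (N : ℤ → ℕ) (E : (j : ℤ) → Fin (N j) → Set Sph),
        (∀ j k, MeasurableSet (E j k)) →
        (∀ j, Pairwise fun k k' => Disjoint (E j k) (E j k')) →
        (∀ j, (⋃ k, E j k) = Set.univ) →
        (∀ j k, ∀ y ∈ E j k, ∀ z ∈ E j k, gdist y z < a ^ j) →
        ∀ (xp : (j : ℤ) → Fin (N j) → Sph), (∀ j k, xp j k ∈ E j k) →
        ∀ (φ ψ : (j : ℤ) → Fin (N j) → (Sph → ℂ)),
          (∀ j k, φ j k ∈ MClass X (xp j k) (a ^ j)) →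
          (∀ j k, ψ j k ∈ MClass X (xp j k) (a ^ j)) →
        ∀ F : Sph → ℂ, ContMDiff (𝓡 2) 𝓘(ℝ, ℂ) 1 F →
          -- (a) absolute convergence, uniform on the sphere
          ((∀ x : Sph, Summable fun p : (j : ℤ) × Fin (N j) =>
              ‖(sphMeasure (E p.1 p.2)).toReal * sphInner F (φ p.1 p.2) *
                ψ p.1 p.2 x‖) ∧
            TendstoUniformly
              (fun (s : Finset ((j : ℤ) × Fin (N j))) (x : Sph) =>
                ∑ p ∈ s, ‖(sphMeasure (E p.1 p.2)).toReal * sphInner F (φ p.1 p.2) *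
                  ψ p.1 p.2 x‖)
              (fun x : Sph => ∑' p : (j : ℤ) × Fin (N j),
                ‖(sphMeasure (E p.1 p.2)).toReal * sphInner F (φ p.1 p.2) *
                  ψ p.1 p.2 x‖)
              Filter.atTop) ∧
          -- (b) the L² bound
          (eLpNorm (fun x : Sph => ∑' p : (j : ℤ) × Fin (N j),
              (sphMeasure (E p.1 p.2)).toReal * sphInner F (φ p.1 p.2) * ψ p.1 p.2 x)
              2 sphMeasure ≤
            ENNReal.ofReal C₂ * eLpNorm F 2 sphMeasure) ∧
          -- consequently `S` extends to a bounded operator on `L²(S²)`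
          (∃ Sbar : Lp ℂ 2 sphMeasure →L[ℂ] Lp ℂ 2 sphMeasure,
            ‖Sbar‖ ≤ C₂ ∧
            ∀ G : Sph → ℂ, ContMDiff (𝓡 2) 𝓘(ℝ, ℂ) 1 G →
              ∀ hm : MemLp G 2 sphMeasure,
                (Sbar (hm.toLp G) : Sph → ℂ) =ᵐ[sphMeasure]
                  fun x : Sph => ∑' p : (j : ℤ) × Fin (N j),
                    (sphMeasure (E p.1 p.2)).toReal * sphInner G (φ p.1 p.2) *
                      ψ p.1 p.2 x) := by
  have hXcont := fun i => (hXsmooth i).continuous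
  have hlip := fun (F : Sph → ℂ) (hF : ContMDiff (𝓡 2) 𝓘(ℝ, ℂ) 1 F) =>
    exists_lipschitzWith_of_contMDiff hXcont hXspan hF
  obtain ⟨C₂, hC₂, h⟩ := statement_14_general X hXcont hXspan a ha
  refine ⟨C₂, hC₂, fun N E hE hdisj hcover hdiam xp hxp φ ψ hφ hψ F hF => ?_⟩
  obtain ⟨hconv, hbound, S, hS, hSG⟩ :=
    h N E hE hdisj hcover hdiam xp hxp φ ψ hφ hψ F (hlip F hF)
  exact ⟨hconv, hbound, S, hS, fun G hG => hSG G (hlip G hG)⟩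
end
end
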